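/- arXiv:1507.04454 — 2 statements merged into one kernel-verified Lean document; each statement's English description precedes it below -/
import Mathlib

section
/- For every even n ≥ 4, the ℚ-linear span of {t_σ : σ ∈ Sₙ} is a codimension-one subspace of Inv(sl₂^{⊗n}), and Inv(sl₂^{⊗n}) is the direct sum of this span and the line ℚ·c^{(n)}, where c^{(n)} ∈ sl₂^{⊗n} is the tensor consisting of a copy of the Casimir c = (1/2)·h⊗h + e⊗f + f⊗e in each pair of positions (1,2), (3,4), …, (n−1,n). In particular c^{(n)} does not lie in the span of {t_σ : σ ∈ Sₙ}. (Equivalently, the homotopy sl₂ weight system W^h_n has one-dimensional cokernel spanned by c^{⊗ n/2}.) -/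
/- For every even n = 2m ≥ 4, the ℚ-span S of the tensors t_σ (σ ∈ Sₙ) is a
   codimension-one subspace of Inv(sl₂^{⊗n}), and Inv(sl₂^{⊗n}) = S ⊕ ℚ·c^{(n)},
   where c^{(n)} is the tensor made of a copy of the Casimir
   c = (1/2)h⊗h + e⊗f + f⊗e in each pair of positions (1,2),(3,4),…,(n−1,n).
   In particular c^{(n)} is not in S.  κ and the family t are quantified via
   their defining properties. -/

open scoped TensorProduct

set_option synthInstance.maxHeartbeats 1000000
set_option maxHeartbeats 1000000

noncomputable section

abbrev sl2 : Type := ↥(LieAlgebra.SpecialLinear.sl (Fin 2) ℚ)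

def H : sl2 :=
  ⟨!![1, 0; 0, -1], show _ ∈ LinearMap.ker (Matrix.traceLinearMap (Fin 2) ℚ ℚ) from
    LinearMap.mem_ker.2 (by simp [Matrix.trace_fin_two])⟩

def E : sl2 :=
  ⟨!![0, 1; 0, 0], show _ ∈ LinearMap.ker (Matrix.traceLinearMap (Fin 2) ℚ ℚ) from
    LinearMap.mem_ker.2 (by simp [Matrix.trace_fin_two])⟩

def F : sl2 :=
  ⟨!![0, 0; 1, 0], show _ ∈ LinearMap.ker (Matrix.traceLinearMap (Fin 2) ℚ ℚ) from
    LinearMap.mem_ker.2 (by simp [Matrix.trace_fin_two])⟩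

/-- The n-fold tensor power sl₂^{⊗n}. -/
abbrev TP (n : ℕ) : Type := ⨂[ℚ] (_ : Fin n), sl2

/-- The adjoint action of `x ∈ sl₂` on `sl₂^{⊗n}`, extended as a derivation. -/
def actOn (n : ℕ) (x : sl2) : TP n →ₗ[ℚ] TP n :=
  ∑ i : Fin n,
    PiTensorProduct.map (fun j => if j = i then LieAlgebra.ad ℚ sl2 x else LinearMap.id)

/-- The space of invariant tensors of `sl₂^{⊗n}`. -/
def Invariants (n : ℕ) : Submodule ℚ (TP n) :=
  ⨅ x : sl2, LinearMap.ker (actOn n x)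

/-- Pairing of `sl₂^{⊗n}` against `x₁ ⊗ ⋯ ⊗ xₙ` via `κ^{⊗n}`:
on pure tensors, `pairT κ n x (a₁ ⊗ ⋯ ⊗ aₙ) = ∏ i, κ(aᵢ, xᵢ)`. -/
def pairT (κ : sl2 →ₗ[ℚ] sl2 →ₗ[ℚ] ℚ) (n : ℕ) (x : Fin n → sl2) : TP n →ₗ[ℚ] ℚ :=
  PiTensorProduct.lift
    ((MultilinearMap.mkPiAlgebra ℚ (Fin n) ℚ).compLinearMap fun i => κ.flip (x i))

/-- Left-iterated Lie bracket of a list: `[[⋯[a₁,a₂],⋯],a_k]`. -/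
def lBrk : List sl2 → sl2
  | [] => 0
  | a :: l => l.foldl (fun y z => ⁅y, z⁆) a

/-- `κ([[⋯[x₁,x₂],⋯],x_{k-1}], x_k)`, read as `κ(x₁,x₂)` when `k = 2`. -/
def brkVal (κ : sl2 →ₗ[ℚ] sl2 →ₗ[ℚ] ℚ) {k : ℕ} (x : Fin k → sl2) : ℚ :=
  κ (lBrk (List.ofFn x).dropLast) ((List.ofFn x).getLastD 0)

/-- The components of the Casimir tensor `c = Σ_a coef3 a • (u3 a ⊗ w3 a)`. -/
def u3 : Fin 3 → sl2 := ![H, E, F]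
def w3 : Fin 3 → sl2 := ![H, F, E]
def coef3 : Fin 3 → ℚ := ![1/2, 1, 1]

/-- `c^{(2m)} ∈ sl₂^{⊗2m}`: a copy of the Casimir tensor `c` in each pair of
positions `(1,2), (3,4), …, (2m−1,2m)`. -/
def cPow (m : ℕ) : TP (2 * m) :=
  ∑ g : Fin m → Fin 3, (∏ i, coef3 (g i)) •
    PiTensorProduct.tprod ℚ (fun j : Fin (2 * m) =>
      if j.1 % 2 = 0 then u3 (g ⟨j.1 / 2, by have := j.2; omega⟩)
      else w3 (g ⟨j.1 / 2, by have := j.2; omega⟩))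

/-!
A tensor `t ∈ sl₂^{⊗n}` is identified with the multilinear form `x ↦ κ^{⊗n}(t, x)`.

The trace form obeys `⁅⁅p, q⁆, r⁆ = 2 κ(q, r) p - 2 κ(p, r) q`. It follows that `κ(u, v)` times a
linear tree is a combination of linear trees, and that transposing two arguments of a product of
pairings `κ(x₁, x₂) κ(x₃, x₄) ⋯` changes it by a combination of linear trees; up to trees there is
thus only one product of pairings.

An invariant form is a combination of trees and pairings by induction on `n`. The Casimir element
acts on the first argument by a scalar; moving one of its two brackets to the other arguments
writes `(n + 1) f(x₁, …, xₙ)` as a sum over `j` of two kinds of terms: the antisymmetrization of `f`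
in `x₁` and `xⱼ`, which is an invariant form of `n - 1` arguments with `⁅x₁, xⱼ⁆` substituted, and
`κ(x₁, xⱼ)` times the contraction of `f` in these positions, an invariant form of `n - 2` arguments.

Finally, at `x₁ = ⋯ = xₙ = h` every linear tree with a trivalent vertex vanishes, while the product
of pairings takes the value `2 ^ (n / 2)`.
-/

section IteratedBracket

variable (R : Type*) {𝔤 : Type*} [CommRing R] [LieRing 𝔤] [LieAlgebra R 𝔤]

/-- The left-normed bracket `a ↦ ⁅⋯⁅⁅a, x₁⁆, x₂⁆⋯, x_k⁆` by a list `[x₁, …, x_k]`, as a linear map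
of its innermost entry. -/
def iteratedBracket : List 𝔤 → 𝔤 →ₗ[R] 𝔤
  | [] => LinearMap.id
  | x :: l => iteratedBracket l ∘ₗ (LieModule.toEnd R 𝔤 𝔤 : 𝔤 →ₗ[R] Module.End R 𝔤).flip x

@[simp]
theorem iteratedBracket_nil (a : 𝔤) : iteratedBracket R [] a = a := rfl

@[simp]
theorem iteratedBracket_cons (a x : 𝔤) (l : List 𝔤) :
    iteratedBracket R (x :: l) a = iteratedBracket R l ⁅a, x⁆ := rfl

@[simp]
theorem iteratedBracket_append (a : 𝔤) (l l' : List 𝔤) :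
    iteratedBracket R (l ++ l') a = iteratedBracket R l' (iteratedBracket R l a) := by
  induction l generalizing a with
  | nil => rfl
  | cons x _ ih => exact ih ⁅a, x⁆

theorem iteratedBracket_eq_foldl (a : 𝔤) (l : List 𝔤) :
    iteratedBracket R l a = l.foldl (fun y z => ⁅y, z⁆) a := by
  induction l generalizing a with
  | nil => rfl
  | cons x _ ih => exact ih ⁅a, x⁆

end IteratedBracket

/-- A symmetric invariant form which computes double brackets by the vector triple product rule, as
the trace form of `sl₂` does. -/
structure IsTripleProductForm {R 𝔤 : Type*} [CommRing R] [LieRing 𝔤] [LieAlgebra R 𝔤]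
    (κ : 𝔤 →ₗ[R] 𝔤 →ₗ[R] R) : Prop where
  symm (x y : 𝔤) : κ x y = κ y x
  lie_left (x y z : 𝔤) : κ ⁅x, y⁆ z = κ x ⁅y, z⁆
  lie_lie (p q r : 𝔤) : ⁅⁅p, q⁆, r⁆ = (2 * κ q r) • p - (2 * κ p r) • q

theorem IsTripleProductForm.lie_add_lie {R 𝔤 : Type*} [CommRing R] [LieRing 𝔤] [LieAlgebra R 𝔤]
    {κ : 𝔤 →ₗ[R] 𝔤 →ₗ[R] R} (hκ : IsTripleProductForm κ) (y a b : 𝔤) :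
    κ ⁅y, a⁆ b + κ a ⁅y, b⁆ = 0 := by
  rw [← hκ.lie_left, ← lie_skew y a, map_neg, LinearMap.neg_apply, neg_add_cancel]

section TreeSpan

variable (K : Type*) {R 𝔤 : Type*} [Field K] [CommRing R] [Algebra K R]
  [LieRing 𝔤] [LieAlgebra R 𝔤] (κ : 𝔤 →ₗ[R] 𝔤 →ₗ[R] R)

/-- The value of the linear tree whose leaves are, in order, `a`, the entries of `l`, and `b`. -/
def linearTree (a : 𝔤) (l : List 𝔤) (b : 𝔤) : R := κ (iteratedBracket R l a) b

/-- The span of the values of the linear trees whose leaves form the multiset `s`. Trees with only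
two leaves, which have no trivalent vertex, are excluded. -/
def treeSpan (s : Multiset 𝔤) : Submodule K R :=
  Submodule.span K
    {φ | ∃ (a b : 𝔤) (l : List 𝔤), l ≠ [] ∧ a ::ₘ b ::ₘ ↑l = s ∧ linearTree κ a l b = φ}

/-- The product `κ(x₁, x₂) κ(x₃, x₄) ⋯` over consecutive pairs of a list, and `0` in odd length. -/
def pairingProduct : List 𝔤 → R
  | [] => 1
  | [_] => 0
  | a :: b :: l => κ a b * pairingProduct l

/-- The span of the linear trees with leaves `s` and of all products of pairings of `s`. -/
def treePairingSpan (s : Multiset 𝔤) : Submodule K R :=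
  treeSpan K κ s ⊔ Submodule.span K {φ | ∃ l : List 𝔤, ↑l = s ∧ pairingProduct κ l = φ}

variable {K κ}

theorem pairingProduct_cons_cons (a b : 𝔤) (l : List 𝔤) :
    pairingProduct κ (a :: b :: l) = κ a b * pairingProduct κ l := rfl

theorem linearTree_mem_treeSpan {s : Multiset 𝔤} {a b : 𝔤} {l : List 𝔤} (hl : l ≠ [])
    (hs : a ::ₘ b ::ₘ ↑l = s) : linearTree κ a l b ∈ treeSpan K κ s :=
  Submodule.subset_span ⟨a, b, l, hl, hs, rfl⟩

theorem linearTree_lie_right (hκ : IsTripleProductForm κ) (a u v : 𝔤) (l : List 𝔤) :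
    linearTree κ a l ⁅u, v⁆ = linearTree κ a (l ++ [u]) v := by
  simp [linearTree, hκ.lie_left]

/-- The IHX relation. -/
theorem linearTree_append_lie_cons (a b u v : 𝔤) (l l' : List 𝔤) :
    linearTree κ a (l ++ ⁅u, v⁆ :: l') b =
      linearTree κ a (l ++ u :: v :: l') b - linearTree κ a (l ++ v :: u :: l') b := by
  have jacobi (w : 𝔤) : ⁅w, ⁅u, v⁆⁆ = ⁅⁅w, u⁆, v⁆ - ⁅⁅w, v⁆, u⁆ := by
    rw [leibniz_lie, ← lie_skew u, sub_eq_add_neg]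
  simp only [linearTree, iteratedBracket_append, iteratedBracket_cons, jacobi, map_sub,
    LinearMap.sub_apply]

theorem treeSpan_lie_cons_le (hκ : IsTripleProductForm κ) (u v : 𝔤) (s : Multiset 𝔤) :
    treeSpan K κ (⁅u, v⁆ ::ₘ s) ≤ treeSpan K κ (u ::ₘ v ::ₘ s) := by
  refine Submodule.span_le.2 ?_
  rintro _ ⟨a, b, l, -, hs, rfl⟩
  have mem_leaves : ⁅u, v⁆ ∈ a ::ₘ b ::ₘ (l : Multiset 𝔤) := hs ▸ Multiset.mem_cons_self _ _
  simp only [Multiset.mem_cons, Multiset.mem_coe] at mem_leaves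
  rcases mem_leaves with rfl | rfl | mem_l
  · obtain rfl := (Multiset.cons_inj_right _).1 hs
    exact linearTree_mem_treeSpan (l := v :: l) (by simp) (by
      simp only [← Multiset.cons_coe, ← Multiset.singleton_add]
      abel)
  · rw [Multiset.cons_swap, Multiset.cons_inj_right] at hs
    subst hs
    rw [linearTree_lie_right hκ]
    refine linearTree_mem_treeSpan (by simp) ?_
    simp only [← Multiset.coe_add, ← Multiset.singleton_add, Multiset.coe_singleton]
    abel
  · obtain ⟨l₁, l₂, rfl⟩ := List.append_of_mem mem_l
    have hs' : a ::ₘ b ::ₘ (↑l₁ + ↑l₂) = s := by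
      rw [← Multiset.cons_inj_right ⁅u, v⁆, ← hs]
      simp only [← Multiset.coe_add, ← Multiset.cons_coe, ← Multiset.singleton_add]
      abel
    subst hs'
    rw [SetLike.mem_coe, linearTree_append_lie_cons]
    refine sub_mem (linearTree_mem_treeSpan (by simp) ?_) (linearTree_mem_treeSpan (by simp) ?_) <;>
    · simp only [← Multiset.coe_add, ← Multiset.cons_coe, ← Multiset.singleton_add]
      abel

theorem IsTripleProductForm.four_mul_smul_lie (hκ : IsTripleProductForm κ) (u v a x : 𝔤) :
    (4 * κ u v) • ⁅a, x⁆ = ⁅⁅⁅a, u⁆, v⁆, x⁆ + ⁅⁅⁅u, x⁆, v⁆, a⁆ - ⁅⁅⁅x, a⁆, v⁆, u⁆ := by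
  simp only [hκ.lie_lie _ _ v, sub_lie, smul_lie]
  rw [← lie_skew x a, ← lie_skew x u, ← lie_skew u a]
  module

theorem IsTripleProductForm.four_mul_mul_linearTree (hκ : IsTripleProductForm κ)
    (u v a x b : 𝔤) (l : List 𝔤) :
    4 * (κ u v * linearTree κ a (x :: l) b) = linearTree κ a (u :: v :: x :: l) b +
      linearTree κ u (x :: v :: a :: l) b - linearTree κ x (a :: v :: u :: l) b := by
  have h := congrArg (fun y => κ (iteratedBracket R l y) b) (hκ.four_mul_smul_lie u v a x)
  simpa [linearTree, mul_assoc] using h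

section TwoInvertible

variable [NeZero (2 : K)]

theorem mul_mem_treeSpan_cons_cons (hκ : IsTripleProductForm κ) (u v : 𝔤) {s : Multiset 𝔤} {φ : R}
    (hφ : φ ∈ treeSpan K κ s) : κ u v * φ ∈ treeSpan K κ (u ::ₘ v ::ₘ s) := by
  suffices treeSpan K κ s ≤ (treeSpan K κ (u ::ₘ v ::ₘ s)).comap (LinearMap.mulLeft K (κ u v)) from
    this hφ
  refine Submodule.span_le.2 ?_
  rintro _ ⟨a, b, l, hl, rfl, rfl⟩
  obtain ⟨x, l, rfl⟩ := List.exists_cons_of_ne_nil hl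
  have four_ne_zero : (4 : K) ≠ 0 := by
    rw [show (4 : K) = 2 * 2 by norm_num]
    exact mul_ne_zero two_ne_zero two_ne_zero
  rw [SetLike.mem_coe, Submodule.mem_comap, LinearMap.mulLeft_apply,
    ← Submodule.smul_mem_iff _ four_ne_zero, ofNat_smul_eq_nsmul, nsmul_eq_mul, Nat.cast_ofNat,
    hκ.four_mul_mul_linearTree]
  refine sub_mem (add_mem ?_ ?_) ?_ <;>
  · refine linearTree_mem_treeSpan (by simp) ?_
    simp only [← Multiset.cons_coe, ← Multiset.singleton_add]
    abel

theorem mul_pairingProduct_mem_treeSpan (hκ : IsTripleProductForm κ) {s : Multiset 𝔤} {φ : R}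
    (hφ : φ ∈ treeSpan K κ s) : ∀ l : List 𝔤, φ * pairingProduct κ l ∈ treeSpan K κ (s + ↑l)
  | [] => by simpa [pairingProduct] using hφ
  | [_] => by simp [pairingProduct]
  | a :: b :: l => by
    have h := mul_mem_treeSpan_cons_cons hκ a b (mul_pairingProduct_mem_treeSpan hκ hφ l)
    rwa [mul_left_comm, ← Multiset.add_cons, ← Multiset.add_cons] at h

theorem pairingProduct_swap_sub_mem_treeSpan (hκ : IsTripleProductForm κ) (a b : 𝔤)
    (l₂ : List 𝔤) : ∀ l₁ : List 𝔤,
    pairingProduct κ (l₁ ++ a :: b :: l₂) - pairingProduct κ (l₁ ++ b :: a :: l₂) ∈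
      treeSpan K κ ↑(l₁ ++ a :: b :: l₂)
  | [] => by simp [pairingProduct, hκ.symm a b]
  | [p] => by
    match l₂ with
    | [] => simp [pairingProduct]
    | q :: l₂ =>
      have tree_mem : linearTree κ a [b, p] q ∈ treeSpan K κ ↑[p, a, b, q] :=
        linearTree_mem_treeSpan (by simp) (by
          simp only [← Multiset.cons_coe, ← Multiset.singleton_add]
          abel)
      have tree_eq : linearTree κ a [b, p] q = 2 * (κ p b * κ a q - κ p a * κ b q) := by
        simp only [linearTree, iteratedBracket_cons, iteratedBracket_nil, hκ.lie_lie, map_sub,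
          map_smul, LinearMap.sub_apply, LinearMap.smul_apply, smul_eq_mul, hκ.symm p]
        ring
      have swap_eq : pairingProduct κ ([p] ++ a :: b :: q :: l₂) -
          pairingProduct κ ([p] ++ b :: a :: q :: l₂) =
            -((κ p b * κ a q - κ p a * κ b q) * pairingProduct κ l₂) := by
        simp only [pairingProduct_cons_cons, List.cons_append, List.nil_append]
        ring
      have h := mul_pairingProduct_mem_treeSpan hκ tree_mem l₂
      rw [tree_eq, mul_assoc, ← Nat.cast_two, ← nsmul_eq_mul, ← ofNat_smul_eq_nsmul K,
        Submodule.smul_mem_iff _ two_ne_zero] at h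
      rw [swap_eq, neg_mem_iff]
      exact h
  | p :: q :: l₁ => by
    simp only [List.cons_append, pairingProduct_cons_cons, ← mul_sub, ← Multiset.cons_coe]
    exact mul_mem_treeSpan_cons_cons hκ p q (pairingProduct_swap_sub_mem_treeSpan hκ a b l₂ l₁)

theorem pairingProduct_append_sub_mem_treeSpan (hκ : IsTripleProductForm κ) {l l' : List 𝔤}
    (h : l.Perm l') (l₁ : List 𝔤) :
    pairingProduct κ (l₁ ++ l) - pairingProduct κ (l₁ ++ l') ∈ treeSpan K κ ↑(l₁ ++ l) := by
  induction h generalizing l₁ with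
  | nil => simp
  | cons x _ ih => simpa using ih (l₁ ++ [x])
  | swap x y l => exact pairingProduct_swap_sub_mem_treeSpan hκ y x l l₁
  | trans h₁ _ ih₁ ih₂ =>
    have h₂ := ih₂ l₁
    rw [← Multiset.coe_eq_coe.2 (h₁.append_left l₁)] at h₂
    simpa using add_mem (ih₁ l₁) h₂

theorem treePairingSpan_coe (hκ : IsTripleProductForm κ) (l : List 𝔤) :
    treePairingSpan K κ ↑l = treeSpan K κ ↑l ⊔ K ∙ pairingProduct κ l := by
  refine le_antisymm (sup_le le_sup_left (Submodule.span_le.2 ?_))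
    (sup_le_sup_left (Submodule.span_mono (by simpa using ⟨l, .refl _, rfl⟩)) _)
  rintro _ ⟨l', hl', rfl⟩
  have h := pairingProduct_append_sub_mem_treeSpan (K := K) hκ (Multiset.coe_eq_coe.1 hl') []
  rw [List.nil_append, hl'] at h
  simpa using Submodule.add_mem_sup h (Submodule.mem_span_singleton_self (pairingProduct κ l))

theorem mul_mem_treePairingSpan_cons_cons (hκ : IsTripleProductForm κ) (u v : 𝔤)
    {s : Multiset 𝔤} {φ : R} (hφ : φ ∈ treePairingSpan K κ s) :
    κ u v * φ ∈ treePairingSpan K κ (u ::ₘ v ::ₘ s) := by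
  induction s using Quotient.inductionOn with | _ l
  rw [Multiset.quot_mk_to_coe, treePairingSpan_coe hκ] at hφ
  obtain ⟨ψ, hψ, _, hc, rfl⟩ := Submodule.mem_sup.1 hφ
  obtain ⟨c, rfl⟩ := Submodule.mem_span_singleton.1 hc
  rw [Multiset.quot_mk_to_coe, Multiset.cons_coe, Multiset.cons_coe, treePairingSpan_coe hκ,
    mul_add, mul_smul_comm, ← Multiset.cons_coe, ← Multiset.cons_coe, pairingProduct_cons_cons]
  exact Submodule.add_mem_sup (mul_mem_treeSpan_cons_cons hκ u v hψ)
    (Submodule.smul_mem _ c (Submodule.mem_span_singleton_self _))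

theorem pairingProduct_lie_cons_mem_treeSpan (hκ : IsTripleProductForm κ) (u v : 𝔤) :
    ∀ l : List 𝔤, pairingProduct κ (⁅u, v⁆ :: l) ∈ treeSpan K κ ↑(u :: v :: l)
  | [] => by simp [pairingProduct]
  | b :: l => by
    have tree_mem : linearTree κ u [v] b ∈ treeSpan K κ ↑[u, v, b] :=
      linearTree_mem_treeSpan (by simp) (by
        simp only [← Multiset.cons_coe, ← Multiset.singleton_add]
        abel)
    exact mul_pairingProduct_mem_treeSpan hκ tree_mem l

theorem treePairingSpan_lie_cons_le (hκ : IsTripleProductForm κ) (u v : 𝔤) (s : Multiset 𝔤) :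
    treePairingSpan K κ (⁅u, v⁆ ::ₘ s) ≤ treePairingSpan K κ (u ::ₘ v ::ₘ s) := by
  refine le_trans ?_ le_sup_left
  induction s using Quotient.inductionOn with | _ l
  rw [Multiset.quot_mk_to_coe, Multiset.cons_coe, treePairingSpan_coe hκ]
  exact sup_le (treeSpan_lie_cons_le hκ u v l)
    ((Submodule.span_singleton_le_iff_mem _ _).2 (pairingProduct_lie_cons_mem_treeSpan hκ u v l))

end TwoInvertible

end TreeSpan

section Pointwise

variable {R 𝔤 : Type*} [CommRing R] [LieRing 𝔤] [LieAlgebra R 𝔤] (Ω : Type*)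

/-- Functions `Ω → 𝔤` with the pointwise bracket. -/
instance pointwiseLieRing : LieRing (Ω → 𝔤) where
  bracket x y ω := ⁅x ω, y ω⁆
  add_lie x y z := funext fun ω => add_lie (x ω) (y ω) (z ω)
  lie_add x y z := funext fun ω => lie_add (x ω) (y ω) (z ω)
  lie_self x := funext fun ω => lie_self (x ω)
  leibniz_lie x y z := funext fun ω => leibniz_lie (x ω) (y ω) (z ω)

/-- Functions `Ω → 𝔤` form a Lie algebra over the ring of functions `Ω → R`. -/
instance pointwiseLieAlgebra : LieAlgebra (Ω → R) (Ω → 𝔤) where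
  lie_smul c x y := funext fun ω => lie_smul (c ω) (x ω) (y ω)

/-- The pointwise extension of a bilinear form on `𝔤` to functions `Ω → 𝔤`. -/
def pointwiseForm (κ : 𝔤 →ₗ[R] 𝔤 →ₗ[R] R) : (Ω → 𝔤) →ₗ[Ω → R] (Ω → 𝔤) →ₗ[Ω → R] (Ω → R) :=
  LinearMap.mk₂ (Ω → R) (fun x y ω => κ (x ω) (y ω))
    (fun _ _ _ => funext fun _ => by simp) (fun _ _ _ => funext fun _ => by simp)
    (fun _ _ _ => funext fun _ => by simp) (fun _ _ _ => funext fun _ => by simp)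

variable {Ω}

@[simp]
theorem pointwiseForm_apply (κ : 𝔤 →ₗ[R] 𝔤 →ₗ[R] R) (x y : Ω → 𝔤) (ω : Ω) :
    pointwiseForm Ω κ x y ω = κ (x ω) (y ω) := rfl

theorem IsTripleProductForm.pointwiseForm {κ : 𝔤 →ₗ[R] 𝔤 →ₗ[R] R} (hκ : IsTripleProductForm κ) :
    IsTripleProductForm (pointwiseForm Ω κ) where
  symm x y := funext fun ω => hκ.symm (x ω) (y ω)
  lie_left x y z := funext fun ω => hκ.lie_left (x ω) (y ω) (z ω)
  lie_lie p q r := funext fun ω => hκ.lie_lie (p ω) (q ω) (r ω)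

theorem iteratedBracket_pointwise (l : List (Ω → 𝔤)) (a : Ω → 𝔤) (ω : Ω) :
    iteratedBracket (Ω → R) l a ω = iteratedBracket R (l.map (· ω)) (a ω) := by
  induction l generalizing a with
  | nil => rfl
  | cons x _ ih => exact ih ⁅a, x⁆

theorem linearTree_pointwise (κ : 𝔤 →ₗ[R] 𝔤 →ₗ[R] R) (a b : Ω → 𝔤) (l : List (Ω → 𝔤)) (ω : Ω) :
    linearTree (pointwiseForm Ω κ) a l b ω = linearTree κ (a ω) (l.map (· ω)) (b ω) := by
  simp only [linearTree, pointwiseForm_apply, iteratedBracket_pointwise]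

theorem pairingProduct_pointwise (κ : 𝔤 →ₗ[R] 𝔤 →ₗ[R] R) (ω : Ω) : ∀ l : List (Ω → 𝔤),
    pairingProduct (pointwiseForm Ω κ) l ω = pairingProduct κ (l.map (· ω))
  | [] => rfl
  | [_] => rfl
  | a :: b :: l => by
    simp only [List.map_cons, pairingProduct_cons_cons, Pi.mul_apply, pointwiseForm_apply,
      pairingProduct_pointwise κ ω l]

end Pointwise

section Casimir

variable {R 𝔤 ι : Type*} [CommRing R] [LieRing 𝔤] [LieAlgebra R 𝔤] [Fintype ι]

/-- The families `u` and `w` are dual with respect to `κ` and `𝔤` has dimension three, expressed as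
the trace of the identity; then `∑ a, u a ⊗ w a` is the Casimir tensor of `κ`. -/
structure IsCasimir (κ : 𝔤 →ₗ[R] 𝔤 →ₗ[R] R) (u w : ι → 𝔤) : Prop where
  sum_smul_right (x : 𝔤) : ∑ a, κ x (u a) • w a = x
  trace_eq_three : ∑ a, κ (u a) (w a) = 3

variable {κ : 𝔤 →ₗ[R] 𝔤 →ₗ[R] R} {u w : ι → 𝔤} {M : Type*} [AddCommGroup M] [Module R M]

namespace IsCasimir

theorem eq_zero_of_forall (hc : IsCasimir κ u w) {x : 𝔤} (hx : ∀ y, κ x y = 0) : x = 0 := by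
  rw [← hc.sum_smul_right x]
  simp [hx]

theorem sum_smul_left (hκ : IsTripleProductForm κ) (hc : IsCasimir κ u w) (x : 𝔤) :
    ∑ a, κ x (w a) • u a = x := by
  refine sub_eq_zero.1 (hc.eq_zero_of_forall fun y => ?_)
  have h := congrArg (κ x) (hc.sum_smul_right y)
  simp only [map_sum, map_smul, smul_eq_mul] at h
  simp [← h, hκ.symm y, mul_comm]

theorem sum_map_swap (hκ : IsTripleProductForm κ) (hc : IsCasimir κ u w) (B : 𝔤 →ₗ[R] 𝔤 →ₗ[R] M) :
    ∑ a, B (w a) (u a) = ∑ a, B (u a) (w a) := by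
  calc ∑ a, B (w a) (u a) = ∑ a, ∑ b, κ (w a) (w b) • B (u b) (u a) :=
        Finset.sum_congr rfl fun a _ => by
          conv_lhs => rw [← hc.sum_smul_left hκ (w a)]
          simp
    _ = ∑ b, ∑ a, κ (w b) (w a) • B (u b) (u a) := by
        rw [Finset.sum_comm]
        simp only [hκ.symm]
    _ = ∑ b, B (u b) (w b) := Finset.sum_congr rfl fun b _ => by
        conv_rhs => rw [← hc.sum_smul_left hκ (w b)]
        simp

theorem sum_map_lie_add_map_lie (hκ : IsTripleProductForm κ) (hc : IsCasimir κ u w)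
    (B : 𝔤 →ₗ[R] 𝔤 →ₗ[R] M) (y : 𝔤) : ∑ a, (B ⁅y, u a⁆ (w a) + B (u a) ⁅y, w a⁆) = 0 := by
  have expand_left (a : ι) : B ⁅y, u a⁆ (w a) = ∑ b, κ ⁅y, u a⁆ (w b) • B (u b) (w a) := by
    conv_lhs => rw [← hc.sum_smul_left hκ ⁅y, u a⁆]
    simp
  have expand_right (a : ι) : B (u a) ⁅y, w a⁆ = ∑ b, κ ⁅y, w a⁆ (u b) • B (u a) (w b) := by
    conv_lhs => rw [← hc.sum_smul_right ⁅y, w a⁆]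
    simp
  have coefficient_cancel (a b : ι) : κ ⁅y, u a⁆ (w b) + κ ⁅y, w b⁆ (u a) = 0 := by
    rw [hκ.symm ⁅y, w b⁆, hκ.lie_add_lie]
  simp only [expand_left, expand_right, Finset.sum_add_distrib]
  rw [Finset.sum_comm (f := fun a b => κ ⁅y, w a⁆ (u b) • _)]
  simp only [← Finset.sum_add_distrib, ← add_smul, coefficient_cancel, zero_smul,
    Finset.sum_const_zero]

theorem sum_lie_lie (hκ : IsTripleProductForm κ) (hc : IsCasimir κ u w) (x : 𝔤) :
    ∑ a, ⁅u a, ⁅w a, x⁆⁆ = (4 : R) • x := by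
  have expand (a : ι) : ⁅u a, ⁅w a, x⁆⁆ = (2 * κ (u a) (w a)) • x - (2 : R) • κ x (u a) • w a := by
    rw [← lie_skew, hκ.lie_lie, hκ.symm (w a)]
    module
  simp only [expand, Finset.sum_sub_distrib, ← Finset.sum_smul, ← Finset.mul_sum,
    ← Finset.smul_sum, hc.trace_eq_three, hc.sum_smul_right]
  module

theorem sum_map_lie_lie (hκ : IsTripleProductForm κ) (hc : IsCasimir κ u w)
    (B : 𝔤 →ₗ[R] 𝔤 →ₗ[R] M) (p q : 𝔤) :
    ∑ a, B (u a) ⁅w a, ⁅p, q⁆⁆ = (2 : R) • (B p q - B q p) := by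
  have expand (a : ι) : B (u a) ⁅w a, ⁅p, q⁆⁆ =
      (2 : R) • (B (κ p (w a) • u a) q - B (κ q (w a) • u a) p) := by
    rw [← lie_skew, hκ.lie_lie]
    simp only [map_neg, map_sub, map_smul, LinearMap.smul_apply]
    module
  simp only [expand, ← Finset.smul_sum, Finset.sum_sub_distrib, ← LinearMap.sum_apply, ← map_sum,
    hc.sum_smul_left hκ]

theorem sum_map_lie_map_lie (hκ : IsTripleProductForm κ) (hc : IsCasimir κ u w)
    (B : 𝔤 →ₗ[R] 𝔤 →ₗ[R] M) (p q : 𝔤) :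
    ∑ a, B ⁅w a, p⁆ ⁅u a, q⁆ = (2 : R) • (B q p - κ p q • ∑ a, B (u a) (w a)) := by
  have invariance := hc.sum_map_lie_add_map_lie hκ
    ((B ∘ₗ (LieModule.toEnd R 𝔤 𝔤 : 𝔤 →ₗ[R] Module.End R 𝔤).flip p).flip) q
  have expand (a : ι) : B ⁅w a, p⁆ ⁅u a, q⁆ =
      (2 : R) • (B q (κ p (w a) • u a) - κ p q • B (w a) (u a)) -
        (B ⁅w a, p⁆ ⁅q, u a⁆ + B ⁅⁅q, w a⁆, p⁆ (u a)) := by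
    rw [← lie_skew q, hκ.lie_lie, hκ.symm p, hκ.symm p]
    simp only [map_neg, map_sub, map_smul, LinearMap.smul_apply, LinearMap.sub_apply]
    module
  simp only [LinearMap.flip_apply, LinearMap.comp_apply, LieHom.coe_toLinearMap,
    LieModule.toEnd_apply_apply] at invariance
  simp only [expand, Finset.sum_sub_distrib, ← Finset.smul_sum, ← map_sum, invariance,
    hc.sum_smul_left hκ, hc.sum_map_swap hκ, sub_zero]

theorem sum_map_lie_lie_add (hκ : IsTripleProductForm κ) (hc : IsCasimir κ u w)
    (B : 𝔤 →ₗ[R] 𝔤 →ₗ[R] M) (y v : 𝔤) :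
    ∑ a, (B ⁅y, u a⁆ ⁅w a, v⁆ + B (u a) ⁅y, ⁅w a, v⁆⁆) = ∑ a, B (u a) ⁅w a, ⁅y, v⁆⁆ := by
  have invariance := hc.sum_map_lie_add_map_lie hκ
    (B.compl₂ ((LieModule.toEnd R 𝔤 𝔤 : 𝔤 →ₗ[R] Module.End R 𝔤).flip v)) y
  simp only [LinearMap.compl₂_apply, LinearMap.flip_apply, LieHom.coe_toLinearMap,
    LieModule.toEnd_apply_apply] at invariance
  simp only [leibniz_lie y (w _) v, map_add, ← add_assoc]
  rw [Finset.sum_add_distrib, invariance, zero_add]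

end IsCasimir

end Casimir

section InvariantForms

variable {R 𝔤 : Type*} [CommRing R] [LieRing 𝔤] [LieAlgebra R 𝔤] {n k : ℕ}

/-- The scalar-valued `n`-linear forms on `𝔤`. -/
abbrev MultilinearForm (R 𝔤 : Type*) [CommRing R] [AddCommGroup 𝔤] [Module R 𝔤] (n : ℕ) : Type _ :=
  MultilinearMap R (fun _ : Fin n => 𝔤) R

/-- The `𝔤`-invariant forms, for the adjoint action on each argument. -/
def IsLieInvariant (f : MultilinearForm R 𝔤 n) : Prop :=
  ∀ (y : 𝔤) (x : Fin n → 𝔤), ∑ i, f (Function.update x i ⁅y, x i⁆) = 0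

theorem isLieInvariant_iff_insertNth (p : Fin (n + 1)) {f : MultilinearForm R 𝔤 (n + 1)} :
    IsLieInvariant f ↔ ∀ (y v : 𝔤) (z : Fin n → 𝔤), f (p.insertNth ⁅y, v⁆ z) +
      ∑ i, f (p.insertNth v (Function.update z i ⁅y, z i⁆)) = 0 := by
  have derivation_insertNth (y v : 𝔤) (z : Fin n → 𝔤) :
      ∑ i, f (Function.update (p.insertNth v z) i ⁅y, p.insertNth (α := fun _ => 𝔤) v z i⁆) =
        f (p.insertNth ⁅y, v⁆ z) + ∑ i, f (p.insertNth v (Function.update z i ⁅y, z i⁆)) := by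
    simp [Fin.sum_univ_succAbove _ p, Fin.insertNth_update]
  refine ⟨fun hf y v z => derivation_insertNth y v z ▸ hf y _, fun h y x => ?_⟩
  rw [← Fin.insertNth_self_removeNth p x, derivation_insertNth, h]

/-- The form `f` as a bilinear map of its arguments in positions `0` and `j.succ`, with values in
forms of the remaining arguments. -/
def pairSlice (f : MultilinearForm R 𝔤 (k + 2)) (j : Fin (k + 1)) :
    𝔤 →ₗ[R] 𝔤 →ₗ[R] MultilinearForm R 𝔤 k :=
  (MultilinearMap.curryMidLinearEquiv R (fun _ : Fin (k + 1) => 𝔤) R j).toLinearMap ∘ₗ f.curryLeft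

@[simp]
theorem pairSlice_apply (f : MultilinearForm R 𝔤 (k + 2)) (j : Fin (k + 1)) (u v : 𝔤)
    (z : Fin k → 𝔤) : pairSlice f j u v z = f (Fin.cons u (j.insertNth v z)) := rfl

theorem IsLieInvariant.sum_pairSlice_update {f : MultilinearForm R 𝔤 (k + 2)}
    (hf : IsLieInvariant f) (j : Fin (k + 1)) (y u v : 𝔤) (z : Fin k → 𝔤) :
    ∑ i, pairSlice f j u v (Function.update z i ⁅y, z i⁆) =
      -(pairSlice f j ⁅y, u⁆ v z + pairSlice f j u ⁅y, v⁆ z) := by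
  have h := (isLieInvariant_iff_insertNth 0).1 hf y u (j.insertNth v z)
  simp only [Fin.sum_univ_succAbove _ j, Fin.insertNth_zero', Fin.update_insertNth,
    Fin.insertNth_apply_same, Fin.insertNth_apply_succAbove, ← Fin.insertNth_update] at h
  simp only [pairSlice_apply]
  linear_combination h

section Contraction

variable {ι : Type*} [Fintype ι] {κ : 𝔤 →ₗ[R] 𝔤 →ₗ[R] R} {u w : ι → 𝔤}

variable (u w) in
/-- The form obtained by plugging `∑ a, u a ⊗ w a` into positions `0` and `j.succ`. -/
def contraction (f : MultilinearForm R 𝔤 (k + 2)) (j : Fin (k + 1)) : MultilinearForm R 𝔤 k :=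
  ∑ a, pairSlice f j (u a) (w a)

variable (u w) in
/-- The form obtained by plugging `∑ a, u a ⊗ ⁅w a, v⁆` into positions `0` and `j.succ`, where `v`
becomes the first argument. -/
def bracketContraction (f : MultilinearForm R 𝔤 (k + 2)) (j : Fin (k + 1)) :
    MultilinearForm R 𝔤 (k + 1) :=
  LinearMap.uncurryLeft (∑ a, pairSlice f j (u a) ∘ₗ (LieAlgebra.ad R 𝔤 (w a) : 𝔤 →ₗ[R] 𝔤))

theorem contraction_apply (f : MultilinearForm R 𝔤 (k + 2)) (j : Fin (k + 1)) (z : Fin k → 𝔤) :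
    contraction u w f j z = ∑ a, pairSlice f j (u a) (w a) z := by
  simp only [contraction, sum_apply]

theorem bracketContraction_cons (f : MultilinearForm R 𝔤 (k + 2)) (j : Fin (k + 1)) (v : 𝔤)
    (z : Fin k → 𝔤) :
    bracketContraction u w f j (Fin.cons v z) = ∑ a, pairSlice f j (u a) ⁅w a, v⁆ z := by
  simp [bracketContraction, LinearMap.uncurryLeft_apply]

theorem isLieInvariant_contraction (hκ : IsTripleProductForm κ) (hc : IsCasimir κ u w)
    {f : MultilinearForm R 𝔤 (k + 2)} (hf : IsLieInvariant f) (j : Fin (k + 1)) :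
    IsLieInvariant (contraction u w f j) := by
  intro y z
  have h := DFunLike.congr_fun (hc.sum_map_lie_add_map_lie hκ (pairSlice f j) y) z
  simp only [sum_apply, add_apply, zero_apply] at h
  simp only [contraction_apply]
  rw [Finset.sum_comm]
  simpa only [hf.sum_pairSlice_update, Finset.sum_neg_distrib, neg_eq_zero] using h

theorem isLieInvariant_bracketContraction (hκ : IsTripleProductForm κ) (hc : IsCasimir κ u w)
    {f : MultilinearForm R 𝔤 (k + 2)} (hf : IsLieInvariant f) (j : Fin (k + 1)) :
    IsLieInvariant (bracketContraction u w f j) := by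
  refine (isLieInvariant_iff_insertNth 0).2 fun y v z => ?_
  have h := DFunLike.congr_fun (hc.sum_map_lie_lie_add hκ (pairSlice f j) y v) z
  simp only [sum_apply, add_apply] at h
  simp only [Fin.insertNth_zero', bracketContraction_cons]
  rw [Finset.sum_comm]
  simp only [hf.sum_pairSlice_update, Finset.sum_neg_distrib, h, add_neg_cancel]

/-- The Casimir acts on the first argument by the scalar `4`; invariance moves one of its two
brackets to the other arguments. -/
theorem IsLieInvariant.four_mul_apply_cons (hκ : IsTripleProductForm κ) (hc : IsCasimir κ u w)
    {f : MultilinearForm R 𝔤 (n + 1)} (hf : IsLieInvariant f) (v : 𝔤) (z : Fin n → 𝔤) :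
    4 * f (Fin.cons v z) =
      -∑ i, ∑ a, f (Fin.cons ⁅w a, v⁆ (Function.update z i ⁅u a, z i⁆)) := by
  have move_bracket (a : ι) : f (Fin.cons ⁅u a, ⁅w a, v⁆⁆ z) =
      -∑ i, f (Fin.cons ⁅w a, v⁆ (Function.update z i ⁅u a, z i⁆)) := by
    have h := (isLieInvariant_iff_insertNth 0).1 hf (u a) ⁅w a, v⁆ z
    simp only [Fin.insertNth_zero'] at h
    exact eq_neg_of_add_eq_zero_left h
  have casimir := congrArg (fun x => f.curryLeft x z) (hc.sum_lie_lie hκ v)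
  simp only [map_sum, map_smul, sum_apply, smul_apply,
    MultilinearMap.curryLeft_apply, smul_eq_mul] at casimir
  rw [← casimir, Finset.sum_comm, ← Finset.sum_neg_distrib]
  exact Finset.sum_congr rfl fun a _ => move_bracket a

theorem IsLieInvariant.apply_eq_zero_of_one [NoZeroDivisors R] [CharZero R]
    (hκ : IsTripleProductForm κ) (hc : IsCasimir κ u w) {f : MultilinearForm R 𝔤 1}
    (hf : IsLieInvariant f) (x : Fin 1 → 𝔤) : f x = 0 := by
  have h := hf.four_mul_apply_cons hκ hc (x 0) (Fin.tail x)
  rw [Fin.cons_self_tail, Finset.univ_eq_empty, Finset.sum_empty, neg_zero] at h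
  exact (mul_eq_zero.1 h).resolve_left (OfNat.ofNat_ne_zero 4)

theorem IsLieInvariant.add_three_mul_apply [NoZeroDivisors R] [NeZero (2 : R)]
    (hκ : IsTripleProductForm κ) (hc : IsCasimir κ u w)
    {f : MultilinearForm R 𝔤 (k + 2)} (hf : IsLieInvariant f) (v : 𝔤) (z : Fin (k + 1) → 𝔤) :
    (k + 3) * f (Fin.cons v z) = ∑ j, (pairSlice f j v (z j) (j.removeNth z) -
      pairSlice f j (z j) v (j.removeNth z) +
        κ v (z j) * contraction u w f j (j.removeNth z)) := by
  have slot (j : Fin (k + 1)) : ∑ a, f (Fin.cons ⁅w a, v⁆ (Function.update z j ⁅u a, z j⁆)) =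
      2 * (pairSlice f j (z j) v (j.removeNth z) -
        κ v (z j) * contraction u w f j (j.removeNth z)) := by
    have h := DFunLike.congr_fun (hc.sum_map_lie_map_lie hκ (pairSlice f j) v (z j))
      (j.removeNth z)
    simpa [contraction_apply, Fin.insertNth_removeNth] using h
  have self_slice (j : Fin (k + 1)) :
      pairSlice f j v (z j) (j.removeNth z) = f (Fin.cons v z) := by simp
  have h := hf.four_mul_apply_cons hκ hc v z
  simp only [slot, ← Finset.mul_sum, Finset.sum_sub_distrib] at h
  refine mul_left_cancel₀ (two_ne_zero (α := R)) ?_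
  simp only [self_slice, Finset.sum_add_distrib, Finset.sum_sub_distrib, Finset.sum_const,
    Finset.card_univ, Fintype.card_fin, nsmul_eq_mul, Nat.cast_add, Nat.cast_one]
  linear_combination h

section MemTreePairingSpan

variable {K Ω : Type*} [Field K] [LieAlgebra K 𝔤] {κ : 𝔤 →ₗ[K] 𝔤 →ₗ[K] K}

theorem pairSlice_sub_swap_mem_treePairingSpan [NeZero (2 : K)] (hκ : IsTripleProductForm κ)
    (hc : IsCasimir κ u w) {f : MultilinearForm K 𝔤 (k + 2)} {j : Fin (k + 1)} {p q : Ω → 𝔤}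
    {z : Fin k → Ω → 𝔤}
    (hf : (fun ω => bracketContraction u w f j
        (fun i => Fin.cons (α := fun _ => Ω → 𝔤) ⁅p, q⁆ z i ω)) ∈
      treePairingSpan K (pointwiseForm Ω κ) (⁅p, q⁆ ::ₘ Finset.univ.val.map z)) :
    (fun ω => pairSlice f j (p ω) (q ω) (z · ω) - pairSlice f j (q ω) (p ω) (z · ω)) ∈
      treePairingSpan K (pointwiseForm Ω κ) (p ::ₘ q ::ₘ Finset.univ.val.map z) := by
  have antisymmetrize (ω : Ω) : bracketContraction u w f j
      (fun i => Fin.cons (α := fun _ => Ω → 𝔤) ⁅p, q⁆ z i ω) =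
        2 * (pairSlice f j (p ω) (q ω) (z · ω) - pairSlice f j (q ω) (p ω) (z · ω)) := by
    have eval_cons : (fun i => Fin.cons (α := fun _ => Ω → 𝔤) ⁅p, q⁆ z i ω) =
        Fin.cons ⁅p ω, q ω⁆ (z · ω) := by
      ext i
      refine Fin.cases rfl (fun i => rfl) i
    have h := DFunLike.congr_fun (hc.sum_map_lie_lie hκ (pairSlice f j) (p ω) (q ω)) (z · ω)
    simp only [sum_apply, smul_apply, sub_apply, smul_eq_mul] at h
    rw [eval_cons, bracketContraction_cons, h]
  refine (Submodule.smul_mem_iff _ (two_ne_zero (α := K))).1 ?_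
  have h := treePairingSpan_lie_cons_le hκ.pointwiseForm p q _ hf
  simp only [antisymmetrize] at h
  exact h

theorem univ_val_map_eq_cons_removeNth {α : Type*} (x : Fin (n + 1) → α) (p : Fin (n + 1)) :
    Finset.univ.val.map x = x p ::ₘ Finset.univ.val.map (p.removeNth x) := by
  rw [Fin.univ_succAbove n p, Finset.cons_val, Multiset.map_cons, Finset.map_val, Multiset.map_map]
  rfl

theorem IsLieInvariant.mem_treePairingSpan [CharZero K] (hκ : IsTripleProductForm κ)
    (hc : IsCasimir κ u w) : ∀ {n : ℕ} {f : MultilinearForm K 𝔤 n}, IsLieInvariant f →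
    ∀ x : Fin n → Ω → 𝔤, (fun ω => f (x · ω)) ∈
      treePairingSpan K (pointwiseForm Ω κ) (Finset.univ.val.map x)
  | 0, f, _, x => by
    have const_eq : (fun ω => f (x · ω)) = f 0 • pairingProduct (pointwiseForm Ω κ) [] := by
      ext ω
      simp [pairingProduct, Subsingleton.elim (x · ω) 0]
    rw [const_eq]
    exact Submodule.mem_sup_right (Submodule.smul_mem _ _ (Submodule.subset_span ⟨[], rfl, rfl⟩))
  | 1, f, hf, x => by
    simp only [hf.apply_eq_zero_of_one hκ hc]
    exact zero_mem _
  | k + 2, f, hf, x => by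
    have slot_mem (j : Fin (k + 1)) :
        (fun ω => pairSlice f j (x 0 ω) (x j.succ ω) (j.removeNth (Fin.tail x) · ω) -
          pairSlice f j (x j.succ ω) (x 0 ω) (j.removeNth (Fin.tail x) · ω) +
            κ (x 0 ω) (x j.succ ω) * contraction u w f j (j.removeNth (Fin.tail x) · ω)) ∈
          treePairingSpan K (pointwiseForm Ω κ) (Finset.univ.val.map x) := by
      rw [univ_val_map_eq_cons_removeNth x 0, Fin.removeNth_zero,
        univ_val_map_eq_cons_removeNth (Fin.tail x) j]
      refine add_mem (pairSlice_sub_swap_mem_treePairingSpan hκ hc ?_)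
        (mul_mem_treePairingSpan_cons_cons hκ.pointwiseForm (x 0) (x j.succ) ?_)
      · have h := (isLieInvariant_bracketContraction hκ hc hf j).mem_treePairingSpan hκ hc
          (Fin.cons ⁅x 0, x j.succ⁆ (j.removeNth (Fin.tail x)))
        rwa [univ_val_map_eq_cons_removeNth _ 0, Fin.removeNth_zero, Fin.tail_cons] at h
      · exact (isLieInvariant_contraction hκ hc hf j).mem_treePairingSpan hκ hc _
    have k_add_three_ne_zero : (k + 3 : K) ≠ 0 := mod_cast (k + 2).succ_ne_zero
    refine (Submodule.smul_mem_iff _ k_add_three_ne_zero).1 ?_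
    have sum_slots_mem := sum_mem (t := Finset.univ) fun j _ => slot_mem j
    convert sum_slots_mem using 1
    ext ω
    have h := hf.add_three_mul_apply hκ hc (x 0 ω) (Fin.tail (x · ω))
    rw [show Fin.cons (x 0 ω) (Fin.tail (x · ω)) = (x · ω) from
      Fin.cons_self_tail (α := fun _ => 𝔤) fun i => x i ω] at h
    rw [Finset.sum_apply]
    exact h

end MemTreePairingSpan

end Contraction

end InvariantForms

section TreeInvariance

variable {R 𝔤 : Type*} [CommRing R] [LieRing 𝔤] [LieAlgebra R 𝔤] {κ : 𝔤 →ₗ[R] 𝔤 →ₗ[R] R}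

theorem sum_iteratedBracket_ofFn_update (y a : 𝔤) {n : ℕ} (x : Fin n → 𝔤) :
    ∑ i, iteratedBracket R (List.ofFn (Function.update x i ⁅y, x i⁆)) a =
      ⁅y, iteratedBracket R (List.ofFn x) a⁆ - iteratedBracket R (List.ofFn x) ⁅y, a⁆ := by
  induction n generalizing a with
  | zero => simp
  | succ n ih =>
    induction x using Fin.consCases with | _ b z
    simp only [Fin.sum_univ_succ, Fin.cons_zero, Fin.cons_succ, Fin.update_cons_zero,
      ← Fin.cons_update, List.ofFn_cons, iteratedBracket_cons, ih, leibniz_lie y a b, map_add]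
    abel

theorem sum_linearTree_update (hκ : IsTripleProductForm κ) (y a b : 𝔤) {n : ℕ} (z : Fin n → 𝔤) :
    linearTree κ ⁅y, a⁆ (List.ofFn z) b +
      ∑ i, linearTree κ a (List.ofFn (Function.update z i ⁅y, z i⁆)) b +
        linearTree κ a (List.ofFn z) ⁅y, b⁆ = 0 := by
  have h := congrArg (κ · b) (sum_iteratedBracket_ofFn_update (R := R) y a z)
  simp only [map_sum, LinearMap.sum_apply, map_sub, LinearMap.sub_apply] at h
  simp only [linearTree, h, add_sub_cancel, hκ.lie_add_lie]

theorem sum_pairingProduct_ofFn_update (hκ : IsTripleProductForm κ) (y : 𝔤) :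
    ∀ {n : ℕ} (x : Fin n → 𝔤),
      ∑ i, pairingProduct κ (List.ofFn (Function.update x i ⁅y, x i⁆)) = 0
  | 0, _ => by simp
  | 1, _ => by simp [pairingProduct]
  | n + 2, x => by
    induction x using Fin.consCases with | _ a x
    induction x using Fin.consCases with | _ b z
    simp only [Fin.sum_univ_succ, Fin.cons_zero, Fin.cons_succ, Fin.update_cons_zero,
      ← Fin.cons_update, List.ofFn_cons, pairingProduct_cons_cons, ← Finset.mul_sum,
      sum_pairingProduct_ofFn_update hκ y z, mul_zero, add_zero, ← add_mul, hκ.lie_add_lie,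
      zero_mul]

theorem pairingProduct_flatten_ofFn {m : ℕ} (a b : Fin m → 𝔤) :
    pairingProduct κ (List.ofFn fun i => [a i, b i]).flatten = ∏ i, κ (a i) (b i) := by
  induction m with
  | zero => simp [pairingProduct]
  | succ m ih => simp [List.ofFn_succ, pairingProduct_cons_cons, Fin.prod_univ_succ, ih]

theorem pairingProduct_ofFn {m : ℕ} (x : Fin (2 * m) → 𝔤) :
    pairingProduct κ (List.ofFn x) =
      ∏ i : Fin m, κ (x ⟨2 * i, by omega⟩) (x ⟨2 * i + 1, by omega⟩) := by
  rw [List.ofFn_mul', ← pairingProduct_flatten_ofFn]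
  simp

end TreeInvariance

section TensorForm

variable {κ : sl2 →ₗ[ℚ] sl2 →ₗ[ℚ] ℚ} {n : ℕ}

variable (κ n) in
/-- The pairing `κ^{⊗n}` as a map sending a tensor to a multilinear form. -/
def tensorForm : TP n →ₗ[ℚ] MultilinearForm ℚ sl2 n :=
  PiTensorProduct.lift.symm.toLinearMap ∘ₗ PiTensorProduct.dualDistrib ∘ₗ
    PiTensorProduct.map fun _ => κ

theorem tensorForm_apply (t : TP n) (x : Fin n → sl2) : tensorForm κ n t x = pairT κ n x t := by
  induction t using PiTensorProduct.induction_on with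
  | smul_tprod r v => simp [tensorForm, pairT]
  | add t t' ht ht' => simp only [map_add, add_apply, ht, ht']

theorem tensorForm_injective (hκ : Function.Injective κ) :
    Function.Injective (tensorForm κ n) := by
  let e : sl2 ≃ₗ[ℚ] Module.Dual ℚ sl2 :=
    κ.linearEquivOfInjective hκ Subspace.dual_finrank_eq.symm
  exact PiTensorProduct.lift.symm.injective.comp
    (PiTensorProduct.dualDistribEquiv.injective.comp
      (PiTensorProduct.congr fun _ : Fin n => e).injective)

theorem pairT_tprod (x v : Fin n → sl2) :
    pairT κ n x (PiTensorProduct.tprod ℚ v) = ∏ i, κ (v i) (x i) := by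
  simp [pairT]

theorem pairT_actOn (hκ : IsTripleProductForm κ) (y : sl2) (x : Fin n → sl2) (t : TP n) :
    pairT κ n x (actOn n y t) = -∑ i, pairT κ n (Function.update x i ⁅y, x i⁆) t := by
  induction t using PiTensorProduct.induction_on with
  | smul_tprod r v =>
    have slot (i : Fin n) : ∏ j, κ ((if j = i then LieAlgebra.ad ℚ sl2 y else LinearMap.id) (v j))
        (x j) = -∏ j, κ (v j) (Function.update x i ⁅y, x i⁆ j) := by
      rw [← Finset.mul_prod_erase _ _ (Finset.mem_univ i),
        ← Finset.mul_prod_erase _ _ (Finset.mem_univ i), ← neg_mul]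
      congr 1
      · simpa using eq_neg_of_add_eq_zero_left (hκ.lie_add_lie y (v i) (x i))
      · refine Finset.prod_congr rfl fun j hj => ?_
        simp [Finset.ne_of_mem_erase hj]
    simp only [map_smul, actOn, LinearMap.sum_apply, map_sum, PiTensorProduct.map_tprod,
      pairT_tprod, slot, ← Finset.smul_sum, ← smul_neg, Finset.sum_neg_distrib]
  | add t t' ht ht' => simp only [map_add, ht, ht', Finset.sum_add_distrib, neg_add]

theorem mem_invariants_iff (hκ : IsTripleProductForm κ) (hκ_inj : Function.Injective κ)
    (t : TP n) : t ∈ Invariants n ↔ IsLieInvariant (tensorForm κ n t) := by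
  simp only [Invariants, Submodule.mem_iInf, LinearMap.mem_ker, IsLieInvariant, tensorForm_apply]
  refine forall_congr' fun y => ⟨fun ht x => ?_, fun ht => tensorForm_injective hκ_inj ?_⟩
  · rw [← neg_eq_zero, ← pairT_actOn hκ, ht, map_zero]
  · ext x
    rw [tensorForm_apply, pairT_actOn hκ, ht, neg_zero, map_zero, zero_apply]

theorem brkVal_eq_linearTree {x : Fin n → sl2} {a b : sl2} {l : List sl2}
    (hx : List.ofFn x = a :: (l ++ [b])) : brkVal κ x = linearTree κ a l b := by
  rw [brkVal, hx, ← List.cons_append, List.dropLast_concat, List.getLastD_concat, lBrk,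
    linearTree, iteratedBracket_eq_foldl]

theorem sum_brkVal_update (hκ : IsTripleProductForm κ) (y : sl2) (x : Fin (n + 2) → sl2) :
    ∑ i, brkVal κ (Function.update x i ⁅y, x i⁆) = 0 := by
  induction x using Fin.consCases with | _ a x
  induction x using Fin.snocCases with | _ z b
  have brkVal_cons_snoc (a b : sl2) (z : Fin n → sl2) :
      brkVal κ (Fin.cons a (Fin.snoc z b : Fin (n + 1) → sl2) : Fin (n + 2) → sl2) =
        linearTree κ a (List.ofFn z) b := by
    refine brkVal_eq_linearTree ?_
    rw [List.ofFn_cons, List.ofFn_succ']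
    simp [List.concat_eq_append]
  rw [Fin.sum_univ_succ, Fin.sum_univ_castSucc, ← add_assoc]
  simpa only [Fin.cons_zero, Fin.cons_succ, Fin.update_cons_zero, ← Fin.cons_update,
    Fin.update_snoc_last, ← Fin.snoc_update, Fin.snoc_last, Fin.snoc_castSucc, brkVal_cons_snoc]
    using sum_linearTree_update hκ y a b z

theorem sum_brkVal_comp_update (hκ : IsTripleProductForm κ) (σ : Equiv.Perm (Fin (n + 2)))
    (y : sl2) (x : Fin (n + 2) → sl2) :
    ∑ i, brkVal κ (Function.update x i ⁅y, x i⁆ ∘ σ) = 0 := by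
  rw [← Equiv.sum_comp σ, ← sum_brkVal_update hκ y (x ∘ σ)]
  simp only [Function.update_comp_eq_of_injective _ σ.injective, Function.comp_apply]

theorem brkVal_const (x : sl2) : brkVal κ (fun _ : Fin (n + 3) => x) = 0 := by
  have ofFn_eq : (List.ofFn fun _ : Fin (n + 3) => x) = x :: (x :: List.replicate n x ++ [x]) := by
    rw [List.ofFn_const, List.replicate_succ, List.replicate_succ', List.replicate_succ]
  rw [brkVal_eq_linearTree ofFn_eq, linearTree, iteratedBracket_cons, lie_self, map_zero, map_zero,
    LinearMap.zero_apply]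

theorem prod_univ_two_mul {M : Type*} [CommMonoid M] {m : ℕ} (g : Fin (2 * m) → M) :
    ∏ j, g j = ∏ i : Fin m, g ⟨2 * i, by omega⟩ * g ⟨2 * i + 1, by omega⟩ := by
  rw [← List.prod_ofFn, List.ofFn_mul', List.prod_flatten, List.map_ofFn, List.prod_ofFn]
  simp

theorem pairT_cPow (hκ : IsTripleProductForm κ) (hc : IsCasimir κ (fun a => coef3 a • u3 a) w3)
    {m : ℕ} (x : Fin (2 * m) → sl2) :
    pairT κ (2 * m) x (cPow m) = pairingProduct κ (List.ofFn x) := by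
  have casimir (p q : sl2) : ∑ a, coef3 a * (κ (u3 a) p * κ (w3 a) q) = κ p q := by
    conv_rhs => rw [← hc.sum_smul_right p]
    simp [hκ.symm p, mul_assoc]
  have odd_div (i : ℕ) : (2 * i + 1) / 2 = i := by omega
  simp only [cPow, map_sum, map_smul, pairT_tprod, smul_eq_mul, prod_univ_two_mul,
    Nat.mul_mod_right, Nat.mul_add_mod_self_left, Nat.mod_succ, one_ne_zero, if_true, if_false,
    Nat.mul_div_cancel_left _ two_pos, odd_div, Fin.eta, ← Finset.prod_mul_distrib,
    pairingProduct_ofFn, ← casimir (x _), Finset.prod_univ_sum, Fintype.piFinset_univ]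

end TensorForm

section TraceForm

/-- The trace form `(x, y) ↦ tr (x y)` of `sl₂`. -/
def sl2TraceForm : sl2 →ₗ[ℚ] sl2 →ₗ[ℚ] ℚ :=
  LinearMap.mk₂ ℚ (fun x y => (x.1 * y.1).trace) (by simp [add_mul]) (by simp) (by simp [mul_add])
    (by simp)

theorem sl2TraceForm_apply (x y : sl2) : sl2TraceForm x y =
    x.1 0 0 * y.1 0 0 + x.1 0 1 * y.1 1 0 + (x.1 1 0 * y.1 0 1 + x.1 1 1 * y.1 1 1) := by
  simp [sl2TraceForm, Matrix.trace_fin_two, Matrix.mul_apply]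

theorem apply_one_one_eq_neg (x : sl2) : x.1 1 1 = -x.1 0 0 := by
  have h : x.1.trace = 0 := x.2
  rw [Matrix.trace_fin_two] at h
  linarith

theorem sl2_ext {x y : sl2} (h₀₀ : x.1 0 0 = y.1 0 0) (h₀₁ : x.1 0 1 = y.1 0 1)
    (h₁₀ : x.1 1 0 = y.1 1 0) : x = y := by
  ext i j
  fin_cases i <;> fin_cases j
  · exact h₀₀
  · exact h₀₁
  · exact h₁₀
  · simpa [apply_one_one_eq_neg] using h₀₀

theorem sl2TraceForm_H_right (x : sl2) : sl2TraceForm x H = 2 * x.1 0 0 := by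
  simp [sl2TraceForm_apply, H, apply_one_one_eq_neg, two_mul]

theorem sl2TraceForm_H_H : sl2TraceForm H H = 2 := by
  rw [sl2TraceForm_H_right]
  simp [H]

theorem sl2TraceForm_E_right (x : sl2) : sl2TraceForm x E = x.1 1 0 := by
  simp [sl2TraceForm_apply, E]

theorem sl2TraceForm_F_right (x : sl2) : sl2TraceForm x F = x.1 0 1 := by
  simp [sl2TraceForm_apply, F]

theorem eq_smul_H_add_smul_E_add_smul_F (x : sl2) :
    x = x.1 0 0 • H + x.1 0 1 • E + x.1 1 0 • F := by
  refine sl2_ext ?_ ?_ ?_ <;> simp [H, E, F]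

theorem coe_lie_apply (x y : sl2) (i j : Fin 2) : (⁅x, y⁆ : sl2).1 i j =
    x.1 i 0 * y.1 0 j + x.1 i 1 * y.1 1 j - (y.1 i 0 * x.1 0 j + y.1 i 1 * x.1 1 j) := by
  rw [LieAlgebra.SpecialLinear.sl_bracket, Matrix.sub_apply, Matrix.mul_apply, Matrix.mul_apply,
    Fin.sum_univ_two, Fin.sum_univ_two]

theorem isTripleProductForm_sl2TraceForm : IsTripleProductForm sl2TraceForm where
  symm x y := by
    simp only [sl2TraceForm_apply]
    ring
  lie_left x y z := by
    simp only [sl2TraceForm_apply, coe_lie_apply]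
    ring
  lie_lie p q r := by
    refine sl2_ext ?_ ?_ ?_ <;>
    · simp only [sl2TraceForm_apply, coe_lie_apply, apply_one_one_eq_neg, AddSubgroupClass.coe_sub,
        SetLike.val_smul, Matrix.sub_apply, Matrix.smul_apply, smul_eq_mul]
      ring

theorem isCasimir_sl2TraceForm : IsCasimir sl2TraceForm (fun a => coef3 a • u3 a) w3 where
  sum_smul_right x := by
    conv_rhs => rw [eq_smul_H_add_smul_E_add_smul_F x, add_right_comm]
    simp [Fin.sum_univ_three, coef3, u3, w3, sl2TraceForm_H_right,
      sl2TraceForm_E_right, sl2TraceForm_F_right]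
  trace_eq_three := by
    have apply_E_F : sl2TraceForm E F = 1 := by
      rw [sl2TraceForm_F_right]
      simp [E]
    have apply_F_E : sl2TraceForm F E = 1 := by
      rw [sl2TraceForm_E_right]
      simp [F]
    simp only [Fin.sum_univ_three, coef3, u3, w3, map_smul, LinearMap.smul_apply, smul_eq_mul,
      Matrix.cons_val, sl2TraceForm_H_H, apply_E_F, apply_F_E]
    norm_num

theorem eq_sl2TraceForm {κ : sl2 →ₗ[ℚ] sl2 →ₗ[ℚ] ℚ}
    (hHH : κ H H = 2) (hEF : κ E F = 1) (hFE : κ F E = 1)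
    (hHE : κ H E = 0) (hEH : κ E H = 0) (hHF : κ H F = 0) (hFH : κ F H = 0)
    (hEE : κ E E = 0) (hFF : κ F F = 0) : κ = sl2TraceForm := by
  refine LinearMap.ext₂ fun x y => ?_
  conv_lhs => rw [eq_smul_H_add_smul_E_add_smul_F x, eq_smul_H_add_smul_E_add_smul_F y]
  simp only [map_add, map_smul, LinearMap.add_apply, LinearMap.smul_apply, smul_eq_mul, hHH, hEF,
    hFE, hHE, hEH, hHF, hFH, hEE, hFF, sl2TraceForm_apply, apply_one_one_eq_neg]
  ring

theorem sl2TraceForm_injective : Function.Injective sl2TraceForm :=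
  (injective_iff_map_eq_zero _).2 fun _ hx =>
    isCasimir_sl2TraceForm.eq_zero_of_forall fun y => by rw [hx, LinearMap.zero_apply]

end TraceForm

section LinearTreeTensors

theorem exists_eq_ofFn_comp_of_perm {α : Type*} {n : ℕ} {l : List α} {x : Fin n → α}
    (h : l.Perm (List.ofFn x)) : ∃ σ : Equiv.Perm (Fin n), l = List.ofFn (x ∘ σ) := by
  rw [List.ofFn_eq_map] at h
  obtain ⟨s, rfl, hs⟩ : Relation.Comp (· = List.map x ·) List.Perm l (List.finRange n) := by
    rwa [List.eq_map_comp_perm]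
  have length_eq : s.length = n := by simpa using hs.length_eq
  have nodup : s.Nodup := hs.nodup_iff.2 (List.nodup_finRange n)
  have mem (i : Fin n) : i ∈ s := hs.mem_iff.2 (List.mem_finRange i)
  refine ⟨(finCongr length_eq.symm).trans (nodup.getEquivOfForallMemList s mem), ?_⟩
  exact List.ext_get (by simp [length_eq]) (by simp)

section

variable {κ : sl2 →ₗ[ℚ] sl2 →ₗ[ℚ] ℚ}

theorem treeSpan_eval_le_map {n : ℕ} {t : Equiv.Perm (Fin n) → TP n}
    (ht : ∀ σ x, pairT κ n x (t σ) = brkVal κ (x ∘ σ)) :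
    treeSpan ℚ (pointwiseForm (Fin n → sl2) κ) ↑(List.ofFn fun i (x : Fin n → sl2) => x i) ≤
      (Submodule.span ℚ (Set.range t)).map (LinearMap.pi (pairT κ n)) := by
  refine Submodule.span_le.2 ?_
  rintro _ ⟨a, b, l, -, hl, rfl⟩
  have leaves_perm : (a :: (l ++ [b])).Perm (List.ofFn fun i (x : Fin n → sl2) => x i) :=
    ((List.perm_append_singleton b l).cons a).trans (Multiset.coe_eq_coe.1 hl)
  obtain ⟨σ, hσ⟩ := exists_eq_ofFn_comp_of_perm leaves_perm
  refine ⟨t σ, Submodule.subset_span ⟨σ, rfl⟩, funext fun x => ?_⟩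
  have eval_leaves : List.ofFn (x ∘ σ) = a x :: (l.map (· x) ++ [b x]) := by
    simpa [List.map_ofFn, Function.comp_def] using (congrArg (List.map (· x)) hσ).symm
  rw [LinearMap.pi_apply, ht, brkVal_eq_linearTree eval_leaves, linearTree_pointwise]

theorem pairingProduct_eval (hκ : IsTripleProductForm κ)
    (hc : IsCasimir κ (fun a => coef3 a • u3 a) w3) (m : ℕ) :
    pairingProduct (pointwiseForm (Fin (2 * m) → sl2) κ) (List.ofFn fun i x => x i) =
      LinearMap.pi (pairT κ (2 * m)) (cPow m) := by
  ext x
  rw [pairingProduct_pointwise, LinearMap.pi_apply, pairT_cPow hκ hc, List.map_ofFn]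
  rfl

theorem treePairingSpan_eval_le_map (hκ : IsTripleProductForm κ)
    (hc : IsCasimir κ (fun a => coef3 a • u3 a) w3) {m : ℕ}
    {t : Equiv.Perm (Fin (2 * m)) → TP (2 * m)}
    (ht : ∀ σ x, pairT κ (2 * m) x (t σ) = brkVal κ (x ∘ σ)) :
    treePairingSpan ℚ (pointwiseForm (Fin (2 * m) → sl2) κ)
        (Finset.univ.val.map fun i (x : Fin (2 * m) → sl2) => x i) ≤
      (Submodule.span ℚ (Set.range t) ⊔ ℚ ∙ cPow m).map (LinearMap.pi (pairT κ (2 * m))) := by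
  rw [Fin.univ_val_map, treePairingSpan_coe hκ.pointwiseForm, pairingProduct_eval hκ hc,
    Submodule.map_sup, Submodule.map_span _ {cPow m}, Set.image_singleton]
  exact sup_le_sup_right (treeSpan_eval_le_map ht) _

end

variable {m : ℕ} {t : Equiv.Perm (Fin (2 * m)) → TP (2 * m)}

theorem cPow_mem_invariants (m : ℕ) : cPow m ∈ Invariants (2 * m) := by
  rw [mem_invariants_iff isTripleProductForm_sl2TraceForm sl2TraceForm_injective]
  intro y x
  simp only [tensorForm_apply,
    pairT_cPow isTripleProductForm_sl2TraceForm isCasimir_sl2TraceForm,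
    sum_pairingProduct_ofFn_update isTripleProductForm_sl2TraceForm]

theorem span_range_le_invariants {n : ℕ} (hn : 2 ≤ n) {t : Equiv.Perm (Fin n) → TP n}
    (ht : ∀ σ x, pairT sl2TraceForm n x (t σ) = brkVal sl2TraceForm (x ∘ σ)) :
    Submodule.span ℚ (Set.range t) ≤ Invariants n := by
  obtain ⟨n, rfl⟩ := Nat.exists_eq_add_of_le' hn
  rw [Submodule.span_le, Set.range_subset_iff]
  intro σ
  rw [SetLike.mem_coe, mem_invariants_iff isTripleProductForm_sl2TraceForm sl2TraceForm_injective]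
  intro y x
  simp only [tensorForm_apply, ht, sum_brkVal_comp_update isTripleProductForm_sl2TraceForm]

theorem cPow_notMem_span_range (hm : 2 ≤ m)
    (ht : ∀ σ x, pairT sl2TraceForm (2 * m) x (t σ) = brkVal sl2TraceForm (x ∘ σ)) :
    cPow m ∉ Submodule.span ℚ (Set.range t) := by
  have trees_vanish :
      Submodule.span ℚ (Set.range t) ≤ (pairT sl2TraceForm (2 * m) fun _ => H).ker := by
    rw [Submodule.span_le, Set.range_subset_iff]
    intro σ
    obtain ⟨n, hn⟩ := Nat.exists_eq_add_of_le' (show 3 ≤ 2 * m by omega)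
    rw [SetLike.mem_coe, LinearMap.mem_ker, ht, Function.comp_def, hn]
    exact brkVal_const H
  intro hmem
  have cPow_vanishes := trees_vanish hmem
  rw [LinearMap.mem_ker, pairT_cPow isTripleProductForm_sl2TraceForm isCasimir_sl2TraceForm,
    pairingProduct_ofFn] at cPow_vanishes
  simp [sl2TraceForm_H_H] at cPow_vanishes

theorem invariants_le_span_range_sup
    (ht : ∀ σ x, pairT sl2TraceForm (2 * m) x (t σ) = brkVal sl2TraceForm (x ∘ σ)) :
    Invariants (2 * m) ≤ Submodule.span ℚ (Set.range t) ⊔ ℚ ∙ cPow m := by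
  intro z hz
  rw [mem_invariants_iff isTripleProductForm_sl2TraceForm sl2TraceForm_injective] at hz
  have values_mem := hz.mem_treePairingSpan isTripleProductForm_sl2TraceForm isCasimir_sl2TraceForm
    fun i (x : Fin (2 * m) → sl2) => x i
  obtain ⟨s, hs, hsz⟩ := treePairingSpan_eval_le_map isTripleProductForm_sl2TraceForm
    isCasimir_sl2TraceForm ht values_mem
  have s_eq : s = z := tensorForm_injective sl2TraceForm_injective
    (MultilinearMap.ext fun x => (tensorForm_apply s x).trans (congrFun hsz x))
  exact s_eq ▸ hs

end LinearTreeTensors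

theorem span_linear_tree_tensors_codim_one_of_even
    (κ : sl2 →ₗ[ℚ] sl2 →ₗ[ℚ] ℚ)
    (hHH : κ H H = 2) (hEF : κ E F = 1) (hFE : κ F E = 1)
    (hHE : κ H E = 0) (hEH : κ E H = 0) (hHF : κ H F = 0) (hFH : κ F H = 0)
    (hEE : κ E E = 0) (hFF : κ F F = 0) :
    ∀ m, 2 ≤ m →
    ∀ t : Equiv.Perm (Fin (2 * m)) → TP (2 * m),
      (∀ σ (x : Fin (2 * m) → sl2), pairT κ (2 * m) x (t σ) = brkVal κ (x ∘ σ)) →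
      Submodule.span ℚ (Set.range t) ≤ Invariants (2 * m) ∧
      Module.finrank ℚ (Invariants (2 * m))
        = Module.finrank ℚ (Submodule.span ℚ (Set.range t)) + 1 ∧
      Submodule.span ℚ (Set.range t) ⊔ Submodule.span ℚ {cPow m}
        = Invariants (2 * m) ∧
      Submodule.span ℚ (Set.range t) ⊓ Submodule.span ℚ {cPow m} = ⊥ ∧
      cPow m ∉ Submodule.span ℚ (Set.range t) := by
  intro m hm t ht
  obtain rfl := eq_sl2TraceForm hHH hEF hFE hHE hEH hHF hFH hEE hFF
  have span_le : Submodule.span ℚ (Set.range t) ≤ Invariants (2 * m) :=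
    span_range_le_invariants (by omega) ht
  have cPow_notMem : cPow m ∉ Submodule.span ℚ (Set.range t) := cPow_notMem_span_range hm ht
  have span_sup_eq : Submodule.span ℚ (Set.range t) ⊔ ℚ ∙ cPow m = Invariants (2 * m) :=
    (sup_le span_le
      ((Submodule.span_singleton_le_iff_mem _ _).2 (cPow_mem_invariants m))).antisymm
        (invariants_le_span_range_sup ht)
  have finrank_eq := Submodule.finrank_sup_span_singleton cPow_notMem
  rw [span_sup_eq] at finrank_eq
  exact ⟨span_le, finrank_eq, span_sup_eq,
    (Submodule.disjoint_span_singleton_of_notMem cPow_notMem).eq_bot, cPow_notMem⟩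
end
end

section
/- For every n ≥ 2, the Riordan number Rₙ equals the sum, over all partitions λ = (λ₁ ≥ λ₂ ≥ λ₃ ≥ 0) of n into at most three parts with λ₁ ≡ λ₂ ≡ λ₃ (mod 2), of the number of standard Young tableaux of shape λ. (This is the dimension count resulting from the Sₙ-module decomposition Inv(sl₂^{⊗n}) ≅ ⊕ V_λ over such partitions λ.) -/
/- For every n ≥ 2, the Riordan number Rₙ equals the sum, over all partitions
   λ = (λ₁ ≥ λ₂ ≥ λ₃ ≥ 0) of n into at most three parts with
   λ₁ ≡ λ₂ ≡ λ₃ (mod 2), of the number of standard Young tableaux of shape λ.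
   The Riordan numbers are quantified via their defining recurrence. -/

noncomputable section

/-- The number of standard Young tableaux of the shape given by the row-length
function `lam : ℕ → ℕ`: fillings `T` of the diagram `{(i,j) | j < lam i}` by
the numbers `1,…,n`, each used exactly once, strictly increasing along rows and
columns (and `0` outside the diagram). -/
def numSYT (lam : ℕ → ℕ) (n : ℕ) : ℕ :=
  Nat.card {T : ℕ × ℕ → ℕ //
    Set.BijOn T {p : ℕ × ℕ | p.2 < lam p.1} (Set.Icc 1 n) ∧
    (∀ p : ℕ × ℕ, ¬ p.2 < lam p.1 → T p = 0) ∧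
    (∀ i j j' : ℕ, j < j' → j' < lam i → T (i, j) < T (i, j')) ∧
    (∀ i i' j : ℕ, i < i' → j < lam i' → T (i, j) < T (i', j))}

open Function

/-!
Removing the largest entry of a standard Young tableau gives the branching rule for the numbers
`f^λ` of tableaux. Read as a duality, it says that `∑_λ f^λ w₀(λ)`, over the partitions `λ` of `n`
with at most `k` rows, equals `wₙ(∅)` as soon as `wₘ₊₁(λ)` is the sum of `wₘ` over all shapes
obtained from `λ` by adding a cell.

For three rows and an odd function `φ : ℤ → ℤ`, take the weight `φ(x - z) - φ(x - y) - φ(y - z)` in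
the shifted row lengths `(x, y, z) = (λ₁ + 2, λ₂ + 1, λ₃)`. It alternates, hence vanishes whenever
an added cell breaks the shape, so summing over the added cells turns `φ(j)` into
`φ(j - 1) + φ(j) + φ(j + 1)`. If `φ` is half of its argument, rounded towards zero, the weight is
the indicator of `λ₁ ≡ λ₂ ≡ λ₃ (mod 2)`; after `n` steps its value at the empty shape is the
difference of the coefficients of `1` and `x` in `(x⁻¹ + 1 + x)ⁿ`, which satisfies the recurrence of
the Riordan numbers.
-/

/-- The cells `(row, column)` of the diagram with row lengths `lam`, both coordinates starting
at `0`. -/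
def diagramCells (lam : ℕ → ℕ) : Set (ℕ × ℕ) := {p | p.2 < lam p.1}

/-- `T` is a standard Young tableau of shape `lam` with entries `1, …, n`, extended by `0` outside
the diagram. -/
structure IsSYT (lam : ℕ → ℕ) (n : ℕ) (T : ℕ × ℕ → ℕ) : Prop where
  bijOn : Set.BijOn T (diagramCells lam) (Set.Icc 1 n)
  eq_zero : ∀ p ∉ diagramCells lam, T p = 0
  row_lt : ∀ i j j', j < j' → j' < lam i → T (i, j) < T (i, j')
  col_lt : ∀ i i' j, i < i' → j < lam i' → T (i, j) < T (i', j)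

theorem numSYT_eq_ncard (lam : ℕ → ℕ) (n : ℕ) : numSYT lam n = {T | IsSYT lam n T}.ncard :=
  Nat.card_congr <| Equiv.subtypeEquivRight fun _ =>
    ⟨fun ⟨hbij, hzero, hrow, hcol⟩ => ⟨hbij, hzero, hrow, hcol⟩,
      fun ⟨hbij, hzero, hrow, hcol⟩ => ⟨hbij, hzero, hrow, hcol⟩⟩

theorem mem_diagramCells {lam : ℕ → ℕ} {i j : ℕ} : (i, j) ∈ diagramCells lam ↔ j < lam i :=
  Iff.rfl

theorem diagramCells_add_single (lam : ℕ → ℕ) (i : ℕ) :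
    diagramCells (lam + Pi.single i 1) = insert (i, lam i) (diagramCells lam) := by
  ext ⟨a, b⟩
  rcases eq_or_ne a i with rfl | hne
  · simp [mem_diagramCells, le_iff_eq_or_lt]
  · simp [mem_diagramCells, hne]

theorem rowEnd_notMem_diagramCells (lam : ℕ → ℕ) (i : ℕ) : (i, lam i) ∉ diagramCells lam :=
  lt_irrefl (lam i)

theorem bijOn_update_diagramCells_iff {lam : ℕ → ℕ} {n i : ℕ} {T : ℕ × ℕ → ℕ} :
    Set.BijOn (update T (i, lam i) (n + 1)) (diagramCells (lam + Pi.single i 1))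
      (Set.Icc 1 (n + 1)) ↔ Set.BijOn T (diagramCells lam) (Set.Icc 1 n) := by
  have hcodomain : Set.Icc 1 (n + 1) =
      insert (update T (i, lam i) (n + 1) (i, lam i)) (Set.Icc 1 n) := by
    ext k
    simp only [update_self, Set.mem_Icc, Set.mem_insert_iff]
    omega
  rw [diagramCells_add_single, hcodomain,
    Set.BijOn.insert_iff (rowEnd_notMem_diagramCells lam i) (by simp)]
  refine Set.EqOn.bijOn_iff fun p hp => update_of_ne ?_ _ _
  exact ne_of_mem_of_not_mem hp (rowEnd_notMem_diagramCells lam i)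

namespace IsSYT

variable {lam : ℕ → ℕ} {n i : ℕ} {T : ℕ × ℕ → ℕ}

theorem le (h : IsSYT lam n T) (p : ℕ × ℕ) : T p ≤ n := by
  by_cases hp : p ∈ diagramCells lam
  · exact (h.bijOn.mapsTo hp).2
  · simp [h.eq_zero p hp]

theorem insert_max (hlam : Antitone lam) (h : IsSYT lam n T) :
    IsSYT (lam + Pi.single i 1) (n + 1) (update T (i, lam i) (n + 1)) := by
  have update_lt_update {p q : ℕ × ℕ} (hq : q ∈ diagramCells (lam + Pi.single i 1))
      (hp : p ≠ (i, lam i)) (hlt : q ∈ diagramCells lam → T p < T q) :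
      update T (i, lam i) (n + 1) p < update T (i, lam i) (n + 1) q := by
    rw [update_of_ne hp]
    rw [diagramCells_add_single] at hq
    rcases eq_or_ne q (i, lam i) with rfl | hne
    · rw [update_self]
      exact Nat.lt_succ_of_le (h.le p)
    · rw [update_of_ne hne]
      exact hlt (hq.resolve_left hne)
  refine ⟨bijOn_update_diagramCells_iff.mpr h.bijOn, fun p hp => ?_, fun a j j' hj hj' => ?_,
    fun a a' j ha hj => ?_⟩
  · rw [diagramCells_add_single, Set.mem_insert_iff, not_or] at hp
    rw [update_of_ne hp.1, h.eq_zero p hp.2]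
  · refine update_lt_update hj' ?_ (h.row_lt a j j' hj)
    rintro ⟨rfl, rfl⟩
    simp only [Pi.add_apply, Pi.single_eq_same] at hj'
    omega
  · refine update_lt_update hj ?_ (h.col_lt a a' j ha)
    rintro ⟨rfl, rfl⟩
    rw [Pi.add_apply, Pi.single_eq_of_ne ha.ne', add_zero] at hj
    exact (hlam ha.le).not_gt hj

theorem erase_max (h : IsSYT (lam + Pi.single i 1) (n + 1) T) (hmax : T (i, lam i) = n + 1) :
    IsSYT lam n (update T (i, lam i) 0) := by
  have hsubset : diagramCells lam ⊆ diagramCells (lam + Pi.single i 1) := by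
    rw [diagramCells_add_single]
    exact Set.subset_insert _ _
  have update_lt_update {p q : ℕ × ℕ} (hq : q ∈ diagramCells lam) (hlt : T p < T q) :
      update T (i, lam i) 0 p < update T (i, lam i) 0 q := by
    have hp : p ≠ (i, lam i) := by
      rintro rfl
      exact (h.le q).not_gt (hmax ▸ hlt)
    rwa [update_of_ne hp,
      update_of_ne (ne_of_mem_of_not_mem hq (rowEnd_notMem_diagramCells lam i))]
  have hT : update (update T (i, lam i) 0) (i, lam i) (n + 1) = T := by
    rw [update_idem, ← hmax, update_eq_self]
  refine ⟨bijOn_update_diagramCells_iff.mp (hT.symm ▸ h.bijOn), fun p hp => ?_,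
    fun a j j' hj hj' => update_lt_update hj' (h.row_lt a j j' hj ?_),
    fun a a' j ha hj => update_lt_update hj (h.col_lt a a' j ha ?_)⟩
  · rcases eq_or_ne p (i, lam i) with rfl | hne
    · exact update_self ..
    · rw [update_of_ne hne]
      refine h.eq_zero p fun hp' => hp ?_
      rw [diagramCells_add_single] at hp'
      exact hp'.resolve_left hne
  · exact hsubset (show (a, j') ∈ diagramCells lam from hj')
  · exact hsubset (show (a', j) ∈ diagramCells lam from hj)

theorem exists_max_at_corner (h : IsSYT lam (n + 1) T) :
    ∃ i j, lam i = j + 1 ∧ lam (i + 1) ≤ j ∧ T (i, j) = n + 1 := by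
  obtain ⟨⟨i, j⟩, hij, hmax⟩ := h.bijOn.surjOn (Set.right_mem_Icc.mpr n.succ_pos)
  refine ⟨i, j, le_antisymm ?_ hij, ?_, hmax⟩ <;> by_contra! hlt
  · exact (h.le (i, j + 1)).not_gt (hmax ▸ h.row_lt i j (j + 1) j.lt_succ_self hlt)
  · exact (h.le (i + 1, j)).not_gt (hmax ▸ h.col_lt i (i + 1) j i.lt_succ_self hlt)

end IsSYT

theorem finite_setOf_isSYT (lam : ℕ → ℕ) (n : ℕ) : {T | IsSYT lam n T}.Finite := by
  rcases Set.eq_empty_or_nonempty {T | IsSYT lam n T} with hempty | ⟨T₀, hT₀⟩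
  · rw [hempty]
    exact Set.finite_empty
  · have : Finite (diagramCells lam) :=
      hT₀.bijOn.finite_iff_finite.mpr (Set.finite_Icc 1 n)
    refine Finite.of_injective (β := diagramCells lam → Set.Icc 1 n)
      (fun T => T.2.bijOn.mapsTo.restrict) fun T U hTU => Subtype.ext (funext fun p => ?_)
    by_cases hp : p ∈ diagramCells lam
    · exact congrArg Subtype.val (congrFun hTU ⟨p, hp⟩)
    · rw [T.2.eq_zero p hp, U.2.eq_zero p hp]

theorem numSYT_zero_zero : numSYT 0 0 = 1 := by
  rw [numSYT_eq_ncard, Set.ncard_eq_one]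
  refine ⟨0, Set.ext fun T => ⟨fun hT => funext fun p => hT.eq_zero p (Nat.not_lt_zero _), ?_⟩⟩
  rintro rfl
  exact ⟨by simp [diagramCells], by simp, by simp, by simp⟩

theorem injOn_update_rowEnd (lam : ℕ → ℕ) (n i k : ℕ) :
    Set.InjOn (fun T => update T (i, lam i) k) {T | IsSYT lam n T} := by
  intro T hT U hU hTU
  funext p
  rcases eq_or_ne p (i, lam i) with rfl | hne
  · rw [hT.eq_zero _ (rowEnd_notMem_diagramCells lam i),
      hU.eq_zero _ (rowEnd_notMem_diagramCells lam i)]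
  · simpa [update_of_ne hne] using congrFun hTU p

section Branching

open Finsupp hiding update

/-- The shape obtained from `lam` by adding a cell at the end of row `i`. -/
def addCell (lam : ℕ →₀ ℕ) (i : ℕ) : ℕ →₀ ℕ := lam + single i 1

/-- The shape obtained from `lam` by removing the last cell of row `i`; it is `lam` itself if that
row is empty. -/
def removeCell (lam : ℕ →₀ ℕ) (i : ℕ) : ℕ →₀ ℕ := lam - single i 1

open Classical in
/-- The rows of the shape `lam` whose last cell can be removed so that the row lengths stay weakly
decreasing. -/
def removableRows (lam : ℕ →₀ ℕ) : Finset ℕ :=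
  {i ∈ lam.support | Antitone (removeCell lam i)}

open Classical in
/-- The rows among the first `k` to which a cell can be added so that the row lengths stay weakly
decreasing. -/
def addableRows (k : ℕ) (lam : ℕ →₀ ℕ) : Finset ℕ :=
  {i ∈ Finset.range k | Antitone (addCell lam i)}

open Classical in
/-- The partitions of `n` into at most `k` parts, as weakly decreasing row-length functions
supported on `{0, …, k - 1}`. -/
def partitionsWithRows (k n : ℕ) : Finset (ℕ →₀ ℕ) :=
  ((Finset.range k).finsuppAntidiag n).filter fun lam => Antitone lam

theorem mem_removableRows {lam : ℕ →₀ ℕ} {i : ℕ} :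
    i ∈ removableRows lam ↔ lam i ≠ 0 ∧ Antitone (removeCell lam i) := by
  simp [removableRows]

theorem mem_addableRows {k : ℕ} {lam : ℕ →₀ ℕ} {i : ℕ} :
    i ∈ addableRows k lam ↔ i < k ∧ Antitone (addCell lam i) := by
  simp [addableRows]

theorem mem_partitionsWithRows {k n : ℕ} {lam : ℕ →₀ ℕ} :
    lam ∈ partitionsWithRows k n ↔
      lam.degree = n ∧ lam.support ⊆ Finset.range k ∧ Antitone lam := by
  classical
  rw [partitionsWithRows, Finset.mem_filter, Finset.mem_finsuppAntidiag', and_assoc]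
  rfl

theorem coe_addCell (lam : ℕ →₀ ℕ) (i : ℕ) : ⇑(addCell lam i) = ⇑lam + Pi.single i 1 := by
  rw [addCell, coe_add, single_eq_pi_single]

theorem removeCell_addCell (lam : ℕ →₀ ℕ) (i : ℕ) : removeCell (addCell lam i) i = lam :=
  add_tsub_cancel_right lam (single i 1)

theorem addCell_removeCell {lam : ℕ →₀ ℕ} {i : ℕ} (hi : lam i ≠ 0) :
    addCell (removeCell lam i) i = lam :=
  tsub_add_cancel_of_le (single_le_iff.mpr (Nat.one_le_iff_ne_zero.mpr hi))

theorem antitone_removeCell {lam : ℕ →₀ ℕ} (hlam : Antitone lam) {i : ℕ}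
    (hi : lam (i + 1) < lam i) : Antitone (removeCell lam i) := by
  refine antitone_nat_of_succ_le fun j => ?_
  have hj : lam (j + 1) ≤ lam j := hlam j.le_succ
  simp only [removeCell, tsub_apply, single_apply]
  split_ifs <;> subst_vars <;> omega

theorem setOf_isSYT_succ {lam : ℕ →₀ ℕ} (hlam : Antitone lam) (n : ℕ) :
    {T | IsSYT lam (n + 1) T} = ⋃ i ∈ (removableRows lam : Set ℕ),
      (fun T => update T (i, removeCell lam i i) (n + 1)) ''
        {T | IsSYT (removeCell lam i) n T} := by
  have coe_eq {i : ℕ} (hi : lam i ≠ 0) : ⇑lam = ⇑(removeCell lam i) + Pi.single i 1 := by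
    rw [← coe_addCell, addCell_removeCell hi]
  ext T
  simp only [Set.mem_iUnion, Finset.mem_coe, mem_removableRows, exists_prop]
  constructor
  · intro hT
    obtain ⟨i, j, hrow, hbelow, hmax⟩ := hT.exists_max_at_corner
    obtain rfl : removeCell lam i i = j := by simp [removeCell, hrow]
    have hi : lam i ≠ 0 := by omega
    refine ⟨i, ⟨hi, antitone_removeCell hlam (by omega)⟩,
      update T (i, removeCell lam i i) 0, ?_, ?_⟩
    · exact (coe_eq hi ▸ hT : IsSYT (_ + _) (n + 1) T).erase_max hmax
    · simp [← hmax]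
  · rintro ⟨i, ⟨hi, hanti⟩, U, hU, rfl⟩
    rw [Set.mem_ofPred_eq, coe_eq hi]
    exact hU.insert_max hanti

theorem pairwiseDisjoint_image_update_isSYT (s : Set ℕ) (lam : ℕ → ℕ → ℕ) (j : ℕ → ℕ) (n : ℕ) :
    s.PairwiseDisjoint fun i =>
      (fun T => update T (i, j i) (n + 1)) '' {T | IsSYT (lam i) n T} := by
  intro i _ i' _ hne
  rw [onFun, Set.disjoint_left]
  rintro _ ⟨T, _, rfl⟩ ⟨U, hU, hUT⟩
  have heq : U (i, j i) = n + 1 := by simpa [hne] using congrFun hUT (i, j i)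
  exact (hU.le (i, j i)).not_gt (by omega)

theorem numSYT_succ {lam : ℕ →₀ ℕ} (hlam : Antitone lam) (n : ℕ) :
    numSYT lam (n + 1) = ∑ i ∈ removableRows lam, numSYT (removeCell lam i) n := by
  rw [numSYT_eq_ncard, setOf_isSYT_succ hlam, (Finset.finite_toSet _).ncard_biUnion
    (fun i _ => (finite_setOf_isSYT _ n).image _)
    (pairwiseDisjoint_image_update_isSYT _ (fun i => removeCell lam i) _ n),
    finsum_mem_coe_finset]
  refine Finset.sum_congr rfl fun i _ => ?_
  rw [(injOn_update_rowEnd _ n i (n + 1)).ncard_image, numSYT_eq_ncard]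

theorem support_addCell (lam : ℕ →₀ ℕ) (i : ℕ) :
    (addCell lam i).support = insert i lam.support := by
  ext j
  rcases eq_or_ne j i with rfl | hne
  · simp [addCell]
  · simp [addCell, hne]

theorem addCell_mem_partitionsWithRows_iff {k n i : ℕ} {lam : ℕ →₀ ℕ} :
    addCell lam i ∈ partitionsWithRows k (n + 1) ∧ i ∈ removableRows (addCell lam i) ↔
      lam ∈ partitionsWithRows k n ∧ i ∈ addableRows k lam := by
  have hdegree : (addCell lam i).degree = n + 1 ↔ lam.degree = n := by
    rw [addCell, map_add, degree_single, add_left_inj]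
  have hne : addCell lam i i ≠ 0 := by simp [addCell]
  simp only [mem_partitionsWithRows, mem_removableRows, mem_addableRows, removeCell_addCell,
    hdegree, support_addCell, Finset.insert_subset_iff, Finset.mem_range]
  tauto

theorem sum_numSYT_succ_smul {M : Type*} [AddCommMonoid M] (k n : ℕ) (w : (ℕ →₀ ℕ) → M) :
    ∑ lam ∈ partitionsWithRows k (n + 1), numSYT lam (n + 1) • w lam =
      ∑ lam ∈ partitionsWithRows k n,
        numSYT lam n • ∑ i ∈ addableRows k lam, w (addCell lam i) := by
  have hbranch : ∀ lam ∈ partitionsWithRows k (n + 1), numSYT lam (n + 1) • w lam =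
      ∑ i ∈ removableRows lam, numSYT (removeCell lam i) n • w lam := fun lam hlam => by
    rw [numSYT_succ (mem_partitionsWithRows.mp hlam).2.2, Finset.sum_smul]
  simp only [Finset.sum_congr rfl hbranch, Finset.smul_sum, Finset.sum_sigma']
  refine Finset.sum_nbij' (fun x => ⟨removeCell x.1 x.2, x.2⟩) (fun x => ⟨addCell x.1 x.2, x.2⟩)
    ?_ ?_ ?_ ?_ ?_ <;> rintro ⟨lam, i⟩ hmem <;> rw [Finset.mem_sigma] at hmem
  · have hcancel := addCell_removeCell (mem_removableRows.mp hmem.2).1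
    exact Finset.mem_sigma.mpr
      (addCell_mem_partitionsWithRows_iff.mp (by simpa only [hcancel] using hmem))
  · exact Finset.mem_sigma.mpr (addCell_mem_partitionsWithRows_iff.mpr hmem)
  · simp only [addCell_removeCell (mem_removableRows.mp hmem.2).1]
  · simp only [removeCell_addCell]
  · simp only [addCell_removeCell (mem_removableRows.mp hmem.2).1]

theorem partitionsWithRows_zero (k : ℕ) : partitionsWithRows k 0 = {0} := by
  ext lam
  rw [mem_partitionsWithRows, degree_eq_zero_iff, Finset.mem_singleton]
  refine ⟨And.left, ?_⟩
  rintro rfl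
  exact ⟨rfl, by simp, antitone_const⟩

theorem sum_numSYT_smul_eq {M : Type*} [AddCommMonoid M] {k : ℕ} {w : ℕ → (ℕ →₀ ℕ) → M}
    (hw : ∀ m (lam : ℕ →₀ ℕ), Antitone lam →
      ∑ i ∈ addableRows k lam, w m (addCell lam i) = w (m + 1) lam) (n m : ℕ) :
    ∑ lam ∈ partitionsWithRows k n, numSYT lam n • w m lam = w (m + n) 0 := by
  induction n generalizing m with
  | zero => simp [partitionsWithRows_zero, numSYT_zero_zero]
  | succ n ih =>
    rw [sum_numSYT_succ_smul, ← Nat.succ_add_eq_add_succ, ← ih]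
    refine Finset.sum_congr rfl fun lam hlam => ?_
    rw [hw m lam (mem_partitionsWithRows.mp hlam).2.2]

end Branching

section NeighborSum

/-- The operator `φ(j) ↦ φ(j - 1) + φ(j) + φ(j + 1)`, i.e. multiplication by `x⁻¹ + 1 + x` on
generating functions. -/
def neighborSum (φ : ℤ → ℤ) (j : ℤ) : ℤ := φ (j - 1) + φ j + φ (j + 1)

theorem iterate_neighborSum_succ (φ : ℤ → ℤ) (n : ℕ) (j : ℤ) :
    neighborSum^[n + 1] φ j =
      neighborSum^[n] φ (j - 1) + neighborSum^[n] φ j + neighborSum^[n] φ (j + 1) := by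
  rw [iterate_succ_apply', neighborSum]

theorem odd_neighborSum {φ : ℤ → ℤ} (hφ : Function.Odd φ) : Function.Odd (neighborSum φ) := by
  intro j
  have hpred : φ (-j - 1) = -φ (j + 1) := by rw [← hφ, neg_add']
  have hsucc : φ (-j + 1) = -φ (j - 1) := by rw [← hφ, neg_sub, neg_add_eq_sub]
  rw [neighborSum, neighborSum, hpred, hsucc, hφ j]
  ring

theorem even_neighborSum {φ : ℤ → ℤ} (hφ : Function.Even φ) : Function.Even (neighborSum φ) := by
  intro j
  have hpred : φ (-j - 1) = φ (j + 1) := by rw [← hφ, neg_sub', sub_neg_eq_add, neg_neg]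
  have hsucc : φ (-j + 1) = φ (j - 1) := by rw [← hφ, neg_add, neg_neg, sub_eq_add_neg]
  rw [neighborSum, neighborSum, hpred, hsucc, hφ j]
  ring

theorem odd_iterate_neighborSum {φ : ℤ → ℤ} (hφ : Function.Odd φ) (n : ℕ) :
    Function.Odd (neighborSum^[n] φ) := by
  induction n with
  | zero => exact hφ
  | succ n ih =>
    rw [iterate_succ_apply']
    exact odd_neighborSum ih

theorem even_iterate_neighborSum {φ : ℤ → ℤ} (hφ : Function.Even φ) (n : ℕ) :
    Function.Even (neighborSum^[n] φ) := by
  induction n with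
  | zero => exact hφ
  | succ n ih =>
    rw [iterate_succ_apply']
    exact even_neighborSum ih

/-- Half of an integer, rounded towards zero so that the function is odd. -/
def truncHalf (j : ℤ) : ℤ := j.tdiv 2

theorem odd_truncHalf : Function.Odd truncHalf := fun j => Int.neg_tdiv j 2

theorem truncHalf_of_nonneg {j : ℤ} (hj : 0 ≤ j) : truncHalf j = j / 2 :=
  Int.tdiv_eq_ediv_of_nonneg hj

/-- The coefficient of `x ^ j` in the Laurent polynomial `(x⁻¹ + 1 + x) ^ n`. -/
def trinomialCoeff (n : ℕ) : ℤ → ℤ := neighborSum^[n] (Pi.single 0 1)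

theorem trinomialCoeff_zero (j : ℤ) : trinomialCoeff 0 j = if j = 0 then 1 else 0 :=
  Pi.single_apply 0 1 j

theorem trinomialCoeff_succ (n : ℕ) (j : ℤ) :
    trinomialCoeff (n + 1) j =
      trinomialCoeff n (j - 1) + trinomialCoeff n j + trinomialCoeff n (j + 1) :=
  iterate_neighborSum_succ _ n j

theorem even_trinomialCoeff (n : ℕ) : Function.Even (trinomialCoeff n) :=
  even_iterate_neighborSum (fun j => by simp [Pi.single_apply]) n

-- The coefficients of `x ^ j` in `x * d/dx (p ^ (n + 1)) = (n + 1) * (x - x⁻¹) * p ^ n`,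
-- where `p = x⁻¹ + 1 + x`.
theorem mul_trinomialCoeff_succ (n : ℕ) (j : ℤ) :
    j * trinomialCoeff (n + 1) j =
      (n + 1) * (trinomialCoeff n (j - 1) - trinomialCoeff n (j + 1)) := by
  induction n generalizing j with
  | zero =>
    simp only [trinomialCoeff_succ, trinomialCoeff_zero]
    split_ifs <;> grind
  | succ n ih =>
    have ih_pred := ih (j - 1)
    have ih_succ := ih (j + 1)
    have hpred := trinomialCoeff_succ n (j - 1)
    have hsucc := trinomialCoeff_succ n (j + 1)
    rw [sub_add_cancel] at ih_pred hpred
    rw [add_sub_cancel_right] at ih_succ hsucc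
    rw [trinomialCoeff_succ (n + 1)]
    push_cast
    linear_combination ih_pred + ih j + ih_succ - (n + 1 : ℤ) * (hpred - hsucc)

theorem truncHalf_difference (j : ℤ) :
    truncHalf (j + 2) - truncHalf (j + 1) - truncHalf j + truncHalf (j - 1) =
      trinomialCoeff 0 j - trinomialCoeff 0 (j + 1) := by
  have hsign : Int.sign 2 = 1 := rfl
  simp only [truncHalf, trinomialCoeff_zero, Int.tdiv_eq_ediv, hsign]
  split_ifs <;> omega

theorem iterate_neighborSum_truncHalf_difference (n : ℕ) (j : ℤ) :
    neighborSum^[n] truncHalf (j + 2) - neighborSum^[n] truncHalf (j + 1) -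
        neighborSum^[n] truncHalf j + neighborSum^[n] truncHalf (j - 1) =
      trinomialCoeff n j - trinomialCoeff n (j + 1) := by
  induction n generalizing j with
  | zero => exact truncHalf_difference j
  | succ n ih =>
    have ih_pred := ih (j - 1)
    have ih_succ := ih (j + 1)
    simp only [iterate_neighborSum_succ, trinomialCoeff_succ]
    ring_nf at ih_pred ih_succ ih ⊢
    linear_combination ih_pred + ih j + ih_succ

end NeighborSum

section Riordan

/-- The Riordan numbers, in closed form as a difference of the two central trinomial
coefficients. -/
def riordanNumber (n : ℕ) : ℤ := trinomialCoeff n 0 - trinomialCoeff n 1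

theorem trinomialCoeff_succ_zero (n : ℕ) :
    trinomialCoeff (n + 1) 0 = trinomialCoeff n 0 + 2 * trinomialCoeff n 1 := by
  rw [trinomialCoeff_succ, zero_sub, zero_add, even_trinomialCoeff]
  ring

theorem mul_trinomialCoeff_succ_one (n : ℕ) :
    (n + 2) * trinomialCoeff (n + 1) 1 =
      (n + 1) * (2 * trinomialCoeff n 0 + trinomialCoeff n 1) := by
  have hstep := trinomialCoeff_succ n 1
  have hderiv := mul_trinomialCoeff_succ n 1
  rw [sub_self] at hstep hderiv
  linear_combination hderiv + (n + 1 : ℤ) * hstep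

theorem riordanNumber_recurrence (n : ℕ) :
    (n + 3) * riordanNumber (n + 2) =
      (n + 1) * (2 * riordanNumber (n + 1) + 3 * riordanNumber n) := by
  have hzero := trinomialCoeff_succ_zero n
  have hzero' := trinomialCoeff_succ_zero (n + 1)
  have hone := mul_trinomialCoeff_succ_one n
  have hone' := mul_trinomialCoeff_succ_one (n + 1)
  push_cast at hone'
  simp only [riordanNumber]
  linear_combination (n + 3 : ℤ) * hzero' - hone' - (3 * n + 3 : ℤ) * hzero + 3 * hone

theorem eq_riordanNumber_of_recurrence {R : ℕ → ℕ} (hR2 : R 2 = 1) (hR3 : R 3 = 1)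
    (hRrec : ∀ n, 4 ≤ n → (n + 1) * R n = (n - 1) * (2 * R (n - 1) + 3 * R (n - 2))) (n : ℕ) :
    (R (n + 2) : ℤ) = riordanNumber (n + 2) := by
  induction n using Nat.twoStepInduction with
  | zero => rw [hR2]; decide
  | one => rw [hR3]; decide
  | more n ih ih' =>
    have hrec : ((n : ℤ) + 5) * R (n + 4) = (n + 3) * (2 * R (n + 3) + 3 * R (n + 2)) :=
      mod_cast hRrec (n + 4) le_add_self
    have hrec' := riordanNumber_recurrence (n + 2)
    push_cast at hrec'
    refine mul_left_cancel₀ (show (n : ℤ) + 5 ≠ 0 by positivity) ?_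
    rw [hrec, ih, ih']
    linear_combination -hrec'

end Riordan

section ThreeRows

/-- In the shifted row lengths `(x, y, z) = (lam 0 + 2, lam 1 + 1, lam 2)` this is
`φ (x - z) - φ (x - y) - φ (y - z)`, which is alternating for odd `φ`. It interpolates between the
equal-parity indicator and the Riordan numbers. -/
def alternatingWeight (φ : ℤ → ℤ) (lam : ℕ →₀ ℕ) : ℤ :=
  φ (lam 0 - lam 2 + 2) - φ (lam 0 - lam 1 + 1) - φ (lam 1 - lam 2 + 1)

theorem antitone_addCell_zero {lam : ℕ →₀ ℕ} (hlam : Antitone lam) : Antitone (addCell lam 0) := by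
  refine antitone_nat_of_succ_le fun j => ?_
  simpa [addCell] using (hlam j.le_succ).trans le_self_add

theorem antitone_addCell_succ_iff {lam : ℕ →₀ ℕ} (hlam : Antitone lam) (i : ℕ) :
    Antitone (addCell lam (i + 1)) ↔ lam (i + 1) < lam i := by
  refine ⟨fun h => by simpa [addCell] using h i.le_succ, fun h => ?_⟩
  refine antitone_nat_of_succ_le fun j => ?_
  have hj : lam (j + 1) ≤ lam j := hlam j.le_succ
  simp only [addCell, Finsupp.add_apply, Finsupp.single_apply]
  split_ifs <;> grind

theorem alternatingWeight_addCell_eq_zero {φ : ℤ → ℤ} (hφ : Function.Odd φ) {lam : ℕ →₀ ℕ}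
    {i : ℕ} (hi : i < 2) (heq : lam (i + 1) = lam i) :
    alternatingWeight φ (addCell lam (i + 1)) = 0 := by
  have hzero : φ 0 = 0 := hφ.map_zero
  interval_cases i <;>
  · simp only [alternatingWeight, addCell, Finsupp.add_apply, Finsupp.single_apply]
    grind

theorem sum_alternatingWeight_addCell {φ : ℤ → ℤ} (hφ : Function.Odd φ) {lam : ℕ →₀ ℕ}
    (hlam : Antitone lam) :
    ∑ i ∈ addableRows 3 lam, alternatingWeight φ (addCell lam i) =
      alternatingWeight (neighborSum φ) lam := by
  have hsubset : addableRows 3 lam ⊆ Finset.range 3 := fun i hi =>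
    Finset.mem_range.mpr (mem_addableRows.mp hi).1
  have hvanish : ∀ i ∈ Finset.range 3, i ∉ addableRows 3 lam →
      alternatingWeight φ (addCell lam i) = 0 := by
    intro i hi hnot
    rw [Finset.mem_range] at hi
    rw [mem_addableRows, not_and] at hnot
    cases i with
    | zero => exact absurd (antitone_addCell_zero hlam) (hnot hi)
    | succ i =>
      have hle := hnot hi
      rw [antitone_addCell_succ_iff hlam, not_lt] at hle
      exact alternatingWeight_addCell_eq_zero hφ (by omega) ((hlam i.le_succ).antisymm hle)
  rw [Finset.sum_subset hsubset hvanish]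
  simp only [Finset.sum_range_succ, Finset.sum_range_zero, alternatingWeight, neighborSum, addCell,
    Finsupp.add_apply, Finsupp.single_apply]
  grind

theorem alternatingWeight_truncHalf {lam : ℕ →₀ ℕ} (hlam : Antitone lam) :
    alternatingWeight truncHalf lam =
      if lam 0 % 2 = lam 1 % 2 ∧ lam 1 % 2 = lam 2 % 2 then 1 else 0 := by
  have h10 : lam 1 ≤ lam 0 := hlam zero_le_one
  have h21 : lam 2 ≤ lam 1 := hlam one_le_two
  rw [alternatingWeight, truncHalf_of_nonneg (by omega), truncHalf_of_nonneg (by omega),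
    truncHalf_of_nonneg (by omega)]
  split_ifs <;> omega

theorem alternatingWeight_iterate_neighborSum_zero (n : ℕ) :
    alternatingWeight (neighborSum^[n] truncHalf) 0 = riordanNumber n := by
  have hodd := odd_iterate_neighborSum odd_truncHalf n
  have hdiff := iterate_neighborSum_truncHalf_difference n 0
  rw [zero_add, zero_add, zero_sub, hodd, hodd.map_zero] at hdiff
  simp only [alternatingWeight, riordanNumber, Finsupp.coe_zero, Pi.zero_apply, Nat.cast_zero,
    sub_self, zero_add]
  linear_combination hdiff

theorem sum_numSYT_equal_parity (n : ℕ) :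
    ((∑ lam ∈ partitionsWithRows 3 n with
        lam 0 % 2 = lam 1 % 2 ∧ lam 1 % 2 = lam 2 % 2, numSYT lam n : ℕ) : ℤ) =
      riordanNumber n := by
  have hduality := sum_numSYT_smul_eq (k := 3)
    (w := fun m => alternatingWeight (neighborSum^[m] truncHalf)) (fun m lam hlam => by
      rw [sum_alternatingWeight_addCell (odd_iterate_neighborSum odd_truncHalf m) hlam,
        iterate_succ_apply']) n 0
  rw [zero_add, alternatingWeight_iterate_neighborSum_zero] at hduality
  rw [← hduality, Finset.sum_filter, Nat.cast_sum]
  refine Finset.sum_congr rfl fun lam hlam => ?_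
  rw [iterate_zero, id_eq,
    alternatingWeight_truncHalf (mem_partitionsWithRows.mp hlam).2.2]
  split_ifs <;> simp

/-- The shape with at most three rows, of lengths `a`, `b` and `c`. -/
def threeRowShape (a b c : ℕ) : ℕ →₀ ℕ :=
  Finsupp.single 0 a + Finsupp.single 1 b + Finsupp.single 2 c

theorem coe_threeRowShape (a b c : ℕ) :
    ⇑(threeRowShape a b c) =
      fun i => if i = 0 then a else if i = 1 then b else if i = 2 then c else 0 := by
  funext i
  simp only [threeRowShape, Finsupp.add_apply, Finsupp.single_apply]
  split_ifs <;> omega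

theorem antitone_threeRowShape_iff {a b c : ℕ} :
    Antitone (threeRowShape a b c) ↔ b ≤ a ∧ c ≤ b := by
  rw [coe_threeRowShape]
  refine ⟨fun h => ⟨by simpa using h zero_le_one, by simpa using h one_le_two⟩, fun h => ?_⟩
  refine antitone_nat_of_succ_le fun i => ?_
  grind

theorem threeRowShape_mem_partitionsWithRows_iff {a b c n : ℕ} :
    threeRowShape a b c ∈ partitionsWithRows 3 n ↔ b ≤ a ∧ c ≤ b ∧ a + b + c = n := by
  have hdegree : (threeRowShape a b c).degree = a + b + c := by
    simp [threeRowShape, Finsupp.degree_single]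
  have hsupport : (threeRowShape a b c).support ⊆ Finset.range 3 := by
    intro i hi
    rw [Finsupp.mem_support_iff, coe_threeRowShape] at hi
    grind
  rw [mem_partitionsWithRows, hdegree, antitone_threeRowShape_iff]
  tauto

theorem threeRowShape_eq_self {lam : ℕ →₀ ℕ} (hlam : lam.support ⊆ Finset.range 3) :
    threeRowShape (lam 0) (lam 1) (lam 2) = lam := by
  ext i
  rw [coe_threeRowShape]
  by_cases hi : i ∈ lam.support
  · have := Finset.mem_range.mp (hlam hi)
    interval_cases i <;> rfl
  · rw [Finsupp.notMem_support_iff] at hi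
    dsimp only
    split_ifs <;> simp_all

theorem sum_threeRowShape_eq {M : Type*} [AddCommMonoid M] (n : ℕ) (p : ℕ → ℕ → ℕ → Prop)
    [∀ a b c, Decidable (p a b c)] (w : (ℕ → ℕ) → M) :
    ∑ lam ∈ Finset.range (n + 1) ×ˢ Finset.range (n + 1) ×ˢ Finset.range (n + 1) with
        lam.2.1 ≤ lam.1 ∧ lam.2.2 ≤ lam.2.1 ∧ lam.1 + lam.2.1 + lam.2.2 = n ∧
          p lam.1 lam.2.1 lam.2.2,
        w (fun i => if i = 0 then lam.1 else if i = 1 then lam.2.1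
          else if i = 2 then lam.2.2 else 0) =
      ∑ lam ∈ partitionsWithRows 3 n with p (lam 0) (lam 1) (lam 2), w lam := by
  refine Finset.sum_nbij' (fun lam => threeRowShape lam.1 lam.2.1 lam.2.2)
    (fun lam => (lam 0, lam 1, lam 2)) ?_ ?_ ?_ ?_ ?_
  · rintro ⟨a, b, c⟩ hmem
    rw [Finset.mem_filter] at hmem ⊢
    obtain ⟨-, hba, hcb, hsum, hp⟩ := hmem
    exact ⟨threeRowShape_mem_partitionsWithRows_iff.mpr ⟨hba, hcb, hsum⟩,
      by simpa [coe_threeRowShape] using hp⟩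
  · intro lam hmem
    obtain ⟨hlam, hp⟩ := Finset.mem_filter.mp hmem
    rw [← threeRowShape_eq_self (mem_partitionsWithRows.mp hlam).2.1,
      threeRowShape_mem_partitionsWithRows_iff] at hlam
    simp only [Finset.mem_filter, Finset.mem_product, Finset.mem_range]
    exact ⟨by omega, hlam.1, hlam.2.1, hlam.2.2, hp⟩
  · intro lam _
    simp [coe_threeRowShape]
  · intro lam hmem
    exact threeRowShape_eq_self (mem_partitionsWithRows.mp (Finset.mem_filter.mp hmem).1).2.1
  · intro lam _
    rw [coe_threeRowShape]

end ThreeRows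

theorem riordan_eq_sum_syt
    (R : ℕ → ℕ) (hR2 : R 2 = 1) (hR3 : R 3 = 1)
    (hRrec : ∀ n, 4 ≤ n → (n + 1) * R n = (n - 1) * (2 * R (n - 1) + 3 * R (n - 2))) :
    ∀ n, 2 ≤ n →
      R n =
        ∑ lam ∈ (Finset.range (n + 1) ×ˢ Finset.range (n + 1) ×ˢ
            Finset.range (n + 1)).filter
            (fun lam => lam.2.1 ≤ lam.1 ∧ lam.2.2 ≤ lam.2.1 ∧
              lam.1 + lam.2.1 + lam.2.2 = n ∧
              lam.1 % 2 = lam.2.1 % 2 ∧ lam.2.1 % 2 = lam.2.2 % 2),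
          numSYT (fun i => if i = 0 then lam.1 else if i = 1 then lam.2.1
            else if i = 2 then lam.2.2 else 0) n := by
  intro n hn
  obtain ⟨k, rfl⟩ := Nat.exists_eq_add_of_le' hn
  rw [← Nat.cast_inj (R := ℤ), eq_riordanNumber_of_recurrence hR2 hR3 hRrec,
    ← sum_numSYT_equal_parity,
    ← sum_threeRowShape_eq _ (fun a b c => a % 2 = b % 2 ∧ b % 2 = c % 2) (numSYT · (k + 2))]
end
end
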